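/- arXiv:1410.1579 — 2 statements merged into one kernel-verified Lean document; each statement's English description precedes it below -/
import Mathlib

section
/- There exists a constant c > 0 such that for infinitely many positive integers n there is a plane straight-line graph on a set of n points in ℝ² that contains at least c·1.7003ⁿ star-shaped polygons. -/
open scoped BigOperators

noncomputable section

/-- Points of the plane. -/
abbrev Pt : Type := ℝ × ℝ

/-- Dot product on the plane. -/
def dotp (a b : Pt) : ℝ := a.1 * b.1 + a.2 * b.2

/-- The geometric conditions making `(V, E)` a plane straight-line graph:
every edge joins two distinct points of `V`, no point of `V` lies in the open
segment of an edge, and the open segments of two distinct edges are disjoint. -/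
def ValidEdges (V : Finset Pt) (E : Finset (Sym2 Pt)) : Prop :=
  (∀ a b : Pt, s(a, b) ∈ E → a ∈ V ∧ b ∈ V ∧ a ≠ b) ∧
  (∀ a b : Pt, s(a, b) ∈ E → ∀ v ∈ V, v ∉ openSegment ℝ a b) ∧
  (∀ a b c d : Pt, s(a, b) ∈ E → s(c, d) ∈ E → s(a, b) ≠ s(c, d) →
    openSegment ℝ a b ∩ openSegment ℝ c d = ∅)

/-- A plane straight-line graph. -/
structure PSLG where
  V : Finset Pt
  E : Finset (Sym2 Pt)
  valid : ValidEdges V E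

/-- A path in `G`: a sequence of at least two vertices, consecutive ones joined by edges. -/
def IsPathIn (G : PSLG) (L : List Pt) : Prop :=
  2 ≤ L.length ∧ L.Chain' (fun a b => s(a, b) ∈ G.E)

/-- An x-monotone path: x-coordinates strictly increasing along the path. -/
def IsXMonotonePath (G : PSLG) (L : List Pt) : Prop :=
  IsPathIn G L ∧ L.Chain' (fun a b => a.1 < b.1)

/-- Monotonicity of a vertex sequence in direction `u`. -/
def MonotoneInDir (u : Pt) (L : List Pt) : Prop :=
  L.Chain' (fun a b => 0 < dotp (b - a) u)

/-- A monotone path: monotone in some direction `u ≠ 0`. -/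
def IsMonotonePath (G : PSLG) (L : List Pt) : Prop :=
  IsPathIn G L ∧ ∃ u : Pt, u ≠ 0 ∧ MonotoneInDir u L

/-- The number of x-monotone paths in `G`. -/
def xMonCount (G : PSLG) : ℕ := Set.ncard {L : List Pt | IsXMonotonePath G L}

/-- The number of monotone paths in `G`, a path and its reversal counted once. -/
def monPathCount (G : PSLG) : ℕ :=
  Set.ncard {P : Set (List Pt) | ∃ L, IsMonotonePath G L ∧ P = {L, L.reverse}}

/-- Consecutive pairs along a cycle (including the wrap-around pair). -/
def cyclePairs (L : List Pt) : List (Pt × Pt) := L.zip (L.rotate 1)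

/-- A cycle in `G`: at least 3 pairwise distinct vertices, cyclically joined by edges. -/
def IsCycleIn (G : PSLG) (L : List Pt) : Prop :=
  3 ≤ L.length ∧ L.Nodup ∧ ∀ p ∈ cyclePairs L, s(p.1, p.2) ∈ G.E

/-- The union of the closed edge segments of a cycle. -/
def cycleBody (L : List Pt) : Set Pt := ⋃ p ∈ cyclePairs L, segment ℝ p.1 p.2

/-- A star-shaped polygon in `G`: a cycle for which some point `o` sees the boundary
in exactly one point along every ray emanating from `o`. -/
def IsStarShapedPolygon (G : PSLG) (L : List Pt) : Prop :=
  IsCycleIn G L ∧ ∃ o : Pt, ∀ d : Pt, d ≠ 0 →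
    ∃! p : Pt, p ∈ cycleBody L ∧ ∃ t : ℝ, 0 ≤ t ∧ p = o + t • d

/-- The edge set of a cycle, used to count polygons. -/
def cycleEdgeSet (L : List Pt) : Finset (Sym2 Pt) :=
  ((cyclePairs L).map (fun p => s(p.1, p.2))).toFinset

/-- The number of star-shaped polygons in `G`, counted by edge sets. -/
def starCount (G : PSLG) : ℕ :=
  Set.ncard {E' : Finset (Sym2 Pt) | ∃ L, IsStarShapedPolygon G L ∧ E' = cycleEdgeSet L}

/-- Cross product (signed area). -/
def crossp (a b : Pt) : ℝ := a.1 * b.2 - a.2 * b.1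

/-- A convex polygon in `G`: a cycle whose vertices are in strictly convex position and
appear along the cycle in their convex-hull cyclic order; equivalently, for every directed
edge of the cycle all other vertices lie strictly on the same (left or right) side. -/
def IsConvexPolygon (G : PSLG) (L : List Pt) : Prop :=
  IsCycleIn G L ∧
  ((∀ p ∈ cyclePairs L, ∀ v ∈ L, v ≠ p.1 → v ≠ p.2 → 0 < crossp (p.2 - p.1) (v - p.1)) ∨
   (∀ p ∈ cyclePairs L, ∀ v ∈ L, v ≠ p.1 → v ≠ p.2 → crossp (p.2 - p.1) (v - p.1) < 0))

/-- The number of convex polygons in `G`, counted by edge sets. -/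
def convexCount (G : PSLG) : ℕ :=
  Set.ncard {E' : Finset (Sym2 Pt) | ∃ L, IsConvexPolygon G L ∧ E' = cycleEdgeSet L}

/-- A triangulation: an edge-maximal plane straight-line graph. -/
def PSLG.IsTriangulation (G : PSLG) : Prop :=
  ∀ a ∈ G.V, ∀ b ∈ G.V, a ≠ b → s(a, b) ∉ G.E → ¬ ValidEdges G.V (insert s(a, b) G.E)

/-- An orientation of a PSLG: each edge `{a, b}` receives exactly one of the ordered
pairs `(a, b)`, `(b, a)`. -/
def IsOrientation (G : PSLG) (D : Finset (Pt × Pt)) : Prop :=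
  (∀ p ∈ D, s(p.1, p.2) ∈ G.E) ∧
  ∀ a b : Pt, s(a, b) ∈ G.E →
    (((a, b) ∈ D ∧ (b, a) ∉ D) ∨ ((b, a) ∈ D ∧ (a, b) ∉ D))

/-- A directed simple path in a directed graph on points. -/
def IsDirPath (D : Finset (Pt × Pt)) (L : List Pt) : Prop :=
  2 ≤ L.length ∧ L.Nodup ∧ L.Chain' (fun a b => (a, b) ∈ D)

/-- The number of directed simple paths. -/
def dirPathCount (D : Finset (Pt × Pt)) : ℕ := Set.ncard {L : List Pt | IsDirPath D L}

/-- No three of the points of `S` are collinear. -/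
def NoThreeCollinear (S : Finset Pt) : Prop :=
  ∀ p ∈ S, ∀ q ∈ S, ∀ r ∈ S, p ≠ q → p ≠ r → q ≠ r → ¬ Collinear ℝ ({p, q, r} : Set Pt)

/-- A maximal monotone path: not a proper subpath (up to reversal) of another
monotone path of `G`. -/
def IsMaximalMonotonePath (G : PSLG) (L : List Pt) : Prop :=
  IsMonotonePath G L ∧ ∀ M : List Pt, IsMonotonePath G M →
    (L <:+: M ∨ L.reverse <:+: M) → (L = M ∨ L.reverse = M)

/-! ### Counting paths in the periodic directed graph on `ℕ` -/

/-- The arcs `i → j` of the periodic graph: steps of length one and two, together with arcs of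
length four and eight spanning dyadic blocks of the even and of the odd vertices. -/
def Arc (i j : ℕ) : Prop :=
  j = i + 1 ∨ j = i + 2 ∨ (j = i + 4 ∧ (i % 4 = 0 ∨ i % 4 = 3)) ∨
    (j = i + 8 ∧ (i % 8 = 0 ∨ i % 8 = 3))

instance : DecidableRel Arc := fun i j => by unfold Arc; infer_instance

lemma Arc.lt {i j : ℕ} (h : Arc i j) : i < j := by unfold Arc at h; omega

/-- `i :: t` is a path of arcs, listed backwards, from `i` down to `0`. -/
def IsDescent (i : ℕ) (t : List ℕ) : Prop :=
  (i :: t).IsChain (fun a b => Arc b a) ∧ t.getLastD i = 0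

/-- There are at least `x` descents from `i` to `0`. -/
def HasDescents (i : ℕ) (x : ℝ) : Prop :=
  ∃ F : Finset (List ℕ), (∀ t ∈ F, IsDescent i t) ∧ x ≤ F.card

lemma HasDescents.mono {i : ℕ} {x y : ℝ} (h : HasDescents i y) (hxy : x ≤ y) :
    HasDescents i x := by
  obtain ⟨F, hF, hy⟩ := h
  exact ⟨F, hF, hxy.trans hy⟩

lemma HasDescents.sum {i : ℕ} (s : Finset ℕ) (hs : ∀ j ∈ s, Arc j i) {x : ℕ → ℝ}
    (hx : ∀ j ∈ s, HasDescents j (x j)) : HasDescents i (∑ j ∈ s, x j) := by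
  classical
  choose! F hF hcard using hx
  refine ⟨s.biUnion fun j => (F j).image (List.cons j), ?_, ?_⟩
  · intro t ht
    simp only [Finset.mem_biUnion, Finset.mem_image] at ht
    obtain ⟨j, hj, u, hu, rfl⟩ := ht
    obtain ⟨h1, h2⟩ := hF j hj u hu
    exact ⟨List.isChain_cons_cons.2 ⟨hs j hj, h1⟩, by rw [List.getLastD_cons]; exact h2⟩
  · rw [Finset.card_biUnion]
    · push_cast
      refine Finset.sum_le_sum fun j hj => (hcard j hj).trans ?_
      rw [Finset.card_image_of_injective _ (List.cons_injective)]
    · intro j _ k _ hjk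
      rw [Function.onFun, Finset.disjoint_left]
      intro t ht ht'
      simp only [Finset.mem_image] at ht ht'
      obtain ⟨u, _, rfl⟩ := ht
      obtain ⟨v, _, hv⟩ := ht'
      exact hjk (List.cons.inj hv).1.symm

lemma hasDescents_one (i : ℕ) : HasDescents i 1 := by
  induction i with
  | zero => exact ⟨{[]}, by simp [IsDescent], by simp⟩
  | succ i ih =>
    have := HasDescents.sum (i := i + 1) {i} (by simp [Arc]) (x := fun _ => 1) (by simpa using ih)
    simpa using this

/-- Weights certifying the growth rate, one for each residue modulo eight. -/
def weight (r : ℕ) : ℝ :=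
  if r = 0 then 20000 else if r = 1 then 31217 else if r = 2 then 51217
  else if r = 3 then 95010 else if r = 4 then 166227 else if r = 5 then 261236
  else if r = 6 then 427463 else 783709

/-- The lower bound, up to a constant, for the number of descents. -/
def growth (i : ℕ) : ℝ := weight (i % 8) / 783709 * ((1.7003 : ℝ) ^ 8) ^ (i / 8)

lemma growth_eq (k r : ℕ) (hr : r < 8) :
    growth (8 * k + r) = weight r / 783709 * ((1.7003 : ℝ) ^ 8) ^ k := by
  have h1 : (8 * k + r) % 8 = r := by omega
  have h2 : (8 * k + r) / 8 = k := by omega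
  rw [growth, h1, h2]

lemma growth_zero (k : ℕ) :
    growth (8 * k) = weight 0 / 783709 * ((1.7003 : ℝ) ^ 8) ^ k := growth_eq k 0 (by norm_num)

lemma hasDescents_growth (i : ℕ) : HasDescents i (growth i) := by
  induction i using Nat.strong_induction_on with
  | _ i ih =>
  by_cases hi : i < 8
  · refine (hasDescents_one i).mono ?_
    have h1 : i / 8 = 0 := by omega
    rw [growth, h1]
    unfold weight
    split_ifs <;> norm_num
  obtain ⟨k, r, hr, rfl⟩ : ∃ k r, r < 8 ∧ i = 8 * (k + 1) + r :=
    ⟨i / 8 - 1, i % 8, by omega, by omega⟩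
  have key : ∀ s : Finset ℕ, (∀ j ∈ s, Arc j (8 * (k + 1) + r)) →
      growth (8 * (k + 1) + r) ≤ ∑ j ∈ s, growth j →
      HasDescents (8 * (k + 1) + r) (growth (8 * (k + 1) + r)) := fun s hs h =>
    (HasDescents.sum s hs fun j hj => ih j (hs j hj).lt).mono h
  have hB : (0 : ℝ) < ((1.7003 : ℝ) ^ 8) ^ k := by positivity
  interval_cases r
  · apply key {8 * k + 7, 8 * k + 6, 8 * k + 4, 8 * k}
    · simp [Arc]; omega
    · rw [Finset.sum_insert (by simp), Finset.sum_insert (by simp), Finset.sum_insert (by simp),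
        Finset.sum_singleton]
      simp only [growth_eq, growth_zero, Nat.reduceLT, add_zero, pow_succ _ k]
      norm_num [weight]
      nlinarith
  · apply key {8 * (k + 1), 8 * k + 7}
    · simp [Arc]; omega
    · rw [Finset.sum_insert (by simp; omega), Finset.sum_singleton]
      simp only [growth_eq, growth_zero, Nat.reduceLT, pow_succ _ k]
      norm_num [weight]
      nlinarith
  · apply key {8 * (k + 1) + 1, 8 * (k + 1)}
    · simp [Arc]
    · rw [Finset.sum_insert (by simp), Finset.sum_singleton]
      simp only [growth_eq, growth_zero, Nat.reduceLT, pow_succ _ k]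
      norm_num [weight]
      nlinarith
  · apply key {8 * (k + 1) + 2, 8 * (k + 1) + 1, 8 * k + 7, 8 * k + 3}
    · simp [Arc]; omega
    · rw [Finset.sum_insert (by simp; omega), Finset.sum_insert (by simp; omega),
        Finset.sum_insert (by simp), Finset.sum_singleton]
      simp only [growth_eq, Nat.reduceLT, pow_succ _ k]
      norm_num [weight]
      nlinarith
  · apply key {8 * (k + 1) + 3, 8 * (k + 1) + 2, 8 * (k + 1)}
    · simp [Arc]; omega
    · rw [Finset.sum_insert (by simp), Finset.sum_insert (by simp), Finset.sum_singleton]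
      simp only [growth_eq, growth_zero, Nat.reduceLT, pow_succ _ k]
      norm_num [weight]
      nlinarith
  · apply key {8 * (k + 1) + 4, 8 * (k + 1) + 3}
    · simp [Arc]
    · rw [Finset.sum_insert (by simp), Finset.sum_singleton]
      simp only [growth_eq, Nat.reduceLT, pow_succ _ k]
      norm_num [weight]
      nlinarith
  · apply key {8 * (k + 1) + 5, 8 * (k + 1) + 4}
    · simp [Arc]
    · rw [Finset.sum_insert (by simp), Finset.sum_singleton]
      simp only [growth_eq, Nat.reduceLT, pow_succ _ k]
      norm_num [weight]
      nlinarith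
  · apply key {8 * (k + 1) + 6, 8 * (k + 1) + 5, 8 * (k + 1) + 3}
    · simp [Arc]; omega
    · rw [Finset.sum_insert (by simp), Finset.sum_insert (by simp), Finset.sum_singleton]
      simp only [growth_eq, Nat.reduceLT, pow_succ _ k]
      norm_num [weight]
      nlinarith

/-! ### The plane graph -/

/-- Vertical displacement: even vertices lie on a convex parabola, odd ones on its mirror image. -/
def disp (i : ℕ) : ℝ := (-1) ^ i * (1 + (i : ℝ) ^ 2)

/-- Half the height of the drawing. -/
def height (N : ℕ) : ℝ := (2 * N + 4) * (1 + (N : ℝ) ^ 2)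

/-- The position of vertex `i`. -/
def vtx (N i : ℕ) : Pt := (i, disp i - height N)

/-- The apex closing up the paths. -/
def apex (N : ℕ) : Pt := (-1, height N)

lemma vtx_injective (N : ℕ) : Function.Injective (vtx N) := fun i j h => by
  simpa [vtx] using congrArg Prod.fst h

lemma apex_ne_vtx (N i : ℕ) : apex N ≠ vtx N i := fun h => by
  have h1 : (-1 : ℝ) = i := congrArg Prod.fst h
  have : (0 : ℝ) ≤ i := i.cast_nonneg
  linarith

lemma disp_le {N i : ℕ} (h : i ≤ N) : disp i ≤ 1 + (N : ℝ) ^ 2 := by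
  have hi : (i : ℝ) ≤ N := by exact_mod_cast h
  have h0 : (0 : ℝ) ≤ i := i.cast_nonneg
  rcases neg_one_pow_eq_or ℝ i with hs | hs <;> rw [disp, hs] <;> nlinarith

lemma neg_le_disp {N i : ℕ} (h : i ≤ N) : -(1 + (N : ℝ) ^ 2) ≤ disp i := by
  have hi : (i : ℝ) ≤ N := by exact_mod_cast h
  have h0 : (0 : ℝ) ≤ i := i.cast_nonneg
  rcases neg_one_pow_eq_or ℝ i with hs | hs <;> rw [disp, hs] <;> nlinarith

/-- Two segments weakly separated by a line which does not contain both are disjoint. -/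
lemma openSegment_disjoint {a b c d : Pt} (α β γ : ℝ)
    (ha : α * a.1 + β * a.2 + γ ≤ 0) (hb : α * b.1 + β * b.2 + γ ≤ 0)
    (hc : 0 ≤ α * c.1 + β * c.2 + γ) (hd : 0 ≤ α * d.1 + β * d.2 + γ)
    (h : (α * a.1 + β * a.2 + γ < 0 ∨ α * b.1 + β * b.2 + γ < 0) ∨
      (0 < α * c.1 + β * c.2 + γ ∨ 0 < α * d.1 + β * d.2 + γ)) :
    openSegment ℝ a b ∩ openSegment ℝ c d = ∅ := by
  rw [Set.eq_empty_iff_forall_notMem]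
  rintro p ⟨⟨u, v, hu, hv, huv, rfl⟩, ⟨u', v', hu', hv', huv', hp⟩⟩
  have h1 := congrArg Prod.fst hp
  have h2 := congrArg Prod.snd hp
  simp only [Prod.fst_add, Prod.snd_add, Prod.smul_fst, Prod.smul_snd, smul_eq_mul] at h1 h2
  have e : u * (α * a.1 + β * a.2 + γ) + v * (α * b.1 + β * b.2 + γ) =
      u' * (α * c.1 + β * c.2 + γ) + v' * (α * d.1 + β * d.2 + γ) := by
    linear_combination (-α) * h1 - β * h2 + γ * huv - γ * huv'
  have l1 := mul_nonpos_of_nonneg_of_nonpos hu.le ha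
  have l2 := mul_nonpos_of_nonneg_of_nonpos hv.le hb
  have l3 := mul_nonneg hu'.le hc
  have l4 := mul_nonneg hv'.le hd
  rcases h with (h | h) | (h | h)
  · linarith [mul_neg_of_pos_of_neg hu h]
  · linarith [mul_neg_of_pos_of_neg hv h]
  · linarith [mul_pos hu' h]
  · linarith [mul_pos hv' h]

/-- The edges of the plane graph, listed with a fixed orientation. -/
inductive IsArc (N : ℕ) : Pt → Pt → Prop
  | arc {i j : ℕ} (h : Arc i j) (hj : j ≤ N) : IsArc N (vtx N i) (vtx N j)
  | left : IsArc N (apex N) (vtx N 0)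
  | right : IsArc N (apex N) (vtx N N)

/-- The value at vertex `m` of the affine functional vanishing on the chord `i j`. -/
lemma chord_le {i j m : ℕ} (hm : i ≤ m) (hm' : m ≤ j) :
    (-1) ^ i * disp m - 1 - (i + j : ℝ) * m + i * j ≤ 0 := by
  have h1 : (i : ℝ) ≤ m := by exact_mod_cast hm
  have h2 : (m : ℝ) ≤ j := by exact_mod_cast hm'
  have hb : (-1 : ℝ) ^ i * disp m ≤ 1 + (m : ℝ) ^ 2 := by
    unfold disp
    rcases neg_one_pow_eq_or ℝ i with hs | hs <;> rcases neg_one_pow_eq_or ℝ m with ht | ht <;>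
      rw [hs, ht] <;> nlinarith
  nlinarith

lemma chord_lt {i j m : ℕ} (hm : i < m) (hm' : m < j) :
    (-1) ^ i * disp m - 1 - (i + j : ℝ) * m + i * j < 0 := by
  have h1 : (i : ℝ) < m := by exact_mod_cast hm
  have h2 : (m : ℝ) < j := by exact_mod_cast hm'
  have hb : (-1 : ℝ) ^ i * disp m ≤ 1 + (m : ℝ) ^ 2 := by
    unfold disp
    rcases neg_one_pow_eq_or ℝ i with hs | hs <;> rcases neg_one_pow_eq_or ℝ m with ht | ht <;>
      rw [hs, ht] <;> nlinarith
  nlinarith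

lemma chord_left (i j : ℕ) : (-1) ^ i * disp i - 1 - (i + j : ℝ) * i + i * j = 0 := by
  unfold disp
  rcases neg_one_pow_eq_or ℝ i with hs | hs <;> rw [hs] <;> ring

lemma neg_one_pow_congr_mod {i j : ℕ} (h : i % 2 = j % 2) : (-1 : ℝ) ^ i = (-1) ^ j := by
  rw [neg_one_pow_eq_pow_mod_two, h, ← neg_one_pow_eq_pow_mod_two]

lemma chord_right {i j : ℕ} (h : i % 2 = j % 2) :
    (-1) ^ i * disp j - 1 - (i + j : ℝ) * j + i * j = 0 := by
  unfold disp
  rw [neg_one_pow_congr_mod h]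
  rcases neg_one_pow_eq_or ℝ j with hs | hs <;> rw [hs] <;> ring

/-- A segment lying in the vertical strip of a chord between vertices of equal parity avoids it. -/
lemma chord_disjoint (N : ℕ) {i j k l : ℕ} (h : i % 2 = j % 2) (hik : i ≤ k) (hkl : k ≤ l)
    (hlj : l ≤ j) (hs : (i < k ∧ k < j) ∨ (i < l ∧ l < j)) :
    openSegment ℝ (vtx N k) (vtx N l) ∩ openSegment ℝ (vtx N i) (vtx N j) = ∅ := by
  have e : ∀ m : ℕ, -(i + j : ℝ) * (vtx N m).1 + (-1) ^ i * (vtx N m).2 +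
      ((-1) ^ i * height N - 1 + i * j) =
      (-1) ^ i * disp m - 1 - (i + j : ℝ) * m + i * j := fun m => by
    simp only [vtx]; ring
  apply openSegment_disjoint (-(i + j : ℝ)) ((-1) ^ i) ((-1) ^ i * height N - 1 + i * j) <;>
    simp only [e]
  · exact chord_le hik (hkl.trans hlj)
  · exact chord_le (hik.trans hkl) hlj
  · exact (chord_left i j).ge
  · exact (chord_right h).ge
  · exact Or.inl (hs.imp (fun h => chord_lt h.1 h.2) (fun h => chord_lt h.1 h.2))

/-- Segments in interior-disjoint vertical strips are disjoint. -/
lemma strip_disjoint (N : ℕ) {i j k l : ℕ} (hij : i ≤ j) (hjk : j ≤ k) (hkl : k ≤ l)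
    (hs : i < j ∨ j < k ∨ k < l) :
    openSegment ℝ (vtx N i) (vtx N j) ∩ openSegment ℝ (vtx N k) (vtx N l) = ∅ := by
  have h1 : (i : ℝ) ≤ j := by exact_mod_cast hij
  have h2 : (j : ℝ) ≤ k := by exact_mod_cast hjk
  have h3 : (k : ℝ) ≤ l := by exact_mod_cast hkl
  have hs' : (i : ℝ) < j ∨ (j : ℝ) < k ∨ (k : ℝ) < l := by exact_mod_cast hs
  apply openSegment_disjoint 1 0 (-((j + k : ℝ) / 2)) <;> simp only [vtx]
  · linarith
  · linarith
  · linarith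
  · linarith
  · rcases hs' with h | h | h
    · exact Or.inl (Or.inl (by linarith))
    · exact Or.inl (Or.inr (by linarith))
    · exact Or.inr (Or.inr (by linarith))

/-- Segments joining vertices of opposite parities are separated by a horizontal line. -/
lemma parity_disjoint (N : ℕ) {i j k l : ℕ} (hij : i % 2 = j % 2) (hkl : k % 2 = l % 2)
    (hik : i % 2 ≠ k % 2) :
    openSegment ℝ (vtx N i) (vtx N j) ∩ openSegment ℝ (vtx N k) (vtx N l) = ∅ := by
  have hk : (-1 : ℝ) ^ k = -(-1) ^ i := by
    rw [neg_one_pow_congr_mod (show k % 2 = (i + 1) % 2 by omega)]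
    ring
  have hj := neg_one_pow_congr_mod hij
  have hl := neg_one_pow_congr_mod hkl
  have e : ∀ m : ℕ, 0 * (vtx N m).1 + -(-1 : ℝ) ^ i * (vtx N m).2 + -(-1 : ℝ) ^ i * height N =
      -(-1 : ℝ) ^ i * disp m := fun m => by simp only [vtx]; ring
  apply openSegment_disjoint 0 (-(-1) ^ i) (-(-1) ^ i * height N) <;> simp only [e] <;>
    unfold disp
  · rcases neg_one_pow_eq_or ℝ i with hs | hs <;> rw [hs] <;> nlinarith
  · rw [← hj]; rcases neg_one_pow_eq_or ℝ i with hs | hs <;> rw [hs] <;> nlinarith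
  · rw [hk]; rcases neg_one_pow_eq_or ℝ i with hs | hs <;> rw [hs] <;> nlinarith
  · rw [← hl, hk]; rcases neg_one_pow_eq_or ℝ i with hs | hs <;> rw [hs] <;> nlinarith
  · left; left
    rcases neg_one_pow_eq_or ℝ i with hs | hs <;> rw [hs] <;> nlinarith

lemma arc_disjoint (N : ℕ) {i j k l : ℕ} (h : Arc i j) (h' : Arc k l) (hne : ¬(i = k ∧ j = l)) :
    openSegment ℝ (vtx N i) (vtx N j) ∩ openSegment ℝ (vtx N k) (vtx N l) = ∅ := by
  have hij := h.lt
  have hkl := h'.lt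
  by_cases h1 : j ≤ k
  · exact strip_disjoint N hij.le h1 hkl.le (Or.inl hij)
  by_cases h2 : l ≤ i
  · rw [Set.inter_comm]
    exact strip_disjoint N hkl.le h2 hij.le (Or.inl hkl)
  by_cases h3 : i % 2 = j % 2 ∧ k % 2 = l % 2 ∧ i % 2 ≠ k % 2
  · exact parity_disjoint N h3.1 h3.2.1 h3.2.2
  have h4 : (i % 2 = j % 2 ∧ i ≤ k ∧ l ≤ j) ∨ (k % 2 = l % 2 ∧ k ≤ i ∧ j ≤ l) := by
    unfold Arc at h h'; omega
  rcases h4 with ⟨hp, ha, hb⟩ | ⟨hp, ha, hb⟩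
  · rw [Set.inter_comm]
    exact chord_disjoint N hp ha hkl.le hb (by omega)
  · exact chord_disjoint N hp ha hij.le hb (by omega)

/-- The line through the apex and vertex `0`. -/
lemma left_form (N m : ℕ) : (2 * height N - 1) * (vtx N m).1 + 1 * (vtx N m).2 + (height N - 1) =
    (2 * height N - 1) * m + disp m - 1 := by simp only [vtx]; ring

lemma left_form_pos {N m : ℕ} (hm : m ≤ N) (h0 : 0 < m) :
    0 < (2 * height N - 1) * m + disp m - 1 := by
  have h1 : (1 : ℝ) ≤ m := by exact_mod_cast h0
  have h2 := neg_le_disp hm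
  have h3 : 4 * (1 + (N : ℝ) ^ 2) ≤ height N := by
    unfold height
    nlinarith [N.cast_nonneg (α := ℝ)]
  nlinarith [sq_nonneg (N : ℝ)]

lemma left_form_nonneg {N m : ℕ} (hm : m ≤ N) :
    0 ≤ (2 * height N - 1) * m + disp m - 1 := by
  rcases Nat.eq_zero_or_pos m with rfl | h
  · simp [disp]
  · exact (left_form_pos hm h).le

/-- The line through the apex and vertex `N`. -/
lemma right_form (N m : ℕ) : -(2 * height N - disp N) * (vtx N m).1 + -(N + 1) * (vtx N m).2 +
    ((2 * height N - disp N) * N + (N + 1) * (disp N - height N)) =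
    (2 * height N - disp N) * (N - m) - (N + 1) * (disp m - disp N) := by
  simp only [vtx]; ring

lemma right_form_pos {N m : ℕ} (hm : m < N) :
    0 < (2 * height N - disp N) * (N - m) - (N + 1) * (disp m - disp N) := by
  have h1 : (1 : ℝ) ≤ N - m := by
    have : ((m + 1 : ℕ) : ℝ) ≤ N := by exact_mod_cast hm
    push_cast at this
    linarith
  have h2 := neg_le_disp le_rfl (i := N)
  have h3 := disp_le le_rfl (i := N)
  have h4 := disp_le hm.le
  have h0 : (0 : ℝ) ≤ N := N.cast_nonneg
  have h5 : (4 * N + 7) * (1 + (N : ℝ) ^ 2) ≤ 2 * height N - disp N := by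
    unfold height; linarith
  have h6 : (0 : ℝ) ≤ 2 * height N - disp N := le_trans (by positivity) h5
  have h7 : (N + 1 : ℝ) * (disp m - disp N) ≤ (N + 1) * (2 * (1 + (N : ℝ) ^ 2)) :=
    mul_le_mul_of_nonneg_left (by linarith) (by linarith)
  nlinarith

lemma right_form_nonneg {N m : ℕ} (hm : m ≤ N) :
    0 ≤ (2 * height N - disp N) * (N - m) - (N + 1) * (disp m - disp N) := by
  rcases hm.eq_or_lt with rfl | h
  · simp
  · exact (right_form_pos h).le

lemma left_disjoint {N k l : ℕ} (hk : k ≤ N) (hl : l ≤ N) (h : 0 < k ∨ 0 < l) :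
    openSegment ℝ (apex N) (vtx N 0) ∩ openSegment ℝ (vtx N k) (vtx N l) = ∅ := by
  apply openSegment_disjoint (2 * height N - 1) 1 (height N - 1)
  · simp only [apex]; linarith
  · rw [left_form]; simp [disp]
  · rw [left_form]; exact left_form_nonneg hk
  · rw [left_form]; exact left_form_nonneg hl
  · rw [left_form _ k, left_form _ l]
    exact Or.inr (h.imp (left_form_pos hk) (left_form_pos hl))

lemma right_disjoint {N k l : ℕ} (hk : k ≤ N) (hl : l ≤ N) (h : k < N ∨ l < N) :
    openSegment ℝ (apex N) (vtx N N) ∩ openSegment ℝ (vtx N k) (vtx N l) = ∅ := by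
  apply openSegment_disjoint (-(2 * height N - disp N)) (-(N + 1))
    ((2 * height N - disp N) * N + (N + 1) * (disp N - height N))
  · simp only [apex]; linarith
  · rw [right_form]; simp
  · rw [right_form]; exact right_form_nonneg hk
  · rw [right_form]; exact right_form_nonneg hl
  · rw [right_form _ k, right_form _ l]
    exact Or.inr (h.imp right_form_pos right_form_pos)

lemma left_right_disjoint {N : ℕ} (hN : 0 < N) :
    openSegment ℝ (apex N) (vtx N 0) ∩ openSegment ℝ (apex N) (vtx N N) = ∅ := by
  apply openSegment_disjoint (2 * height N - 1) 1 (height N - 1)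
  · simp only [apex]; linarith
  · rw [left_form]; simp [disp]
  · simp only [apex]; linarith
  · rw [left_form]; exact left_form_nonneg le_rfl
  · rw [left_form _ N]
    exact Or.inr (Or.inr (left_form_pos le_rfl hN))

lemma IsArc.disjoint {N : ℕ} (hN : 0 < N) {a b c d : Pt} (h : IsArc N a b) (h' : IsArc N c d)
    (hne : s(a, b) ≠ s(c, d)) : openSegment ℝ a b ∩ openSegment ℝ c d = ∅ := by
  cases h with
  | arc h hj =>
    have := h.lt
    cases h' with
    | arc h' hl =>
      refine arc_disjoint N h h' ?_
      rintro ⟨rfl, rfl⟩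
      exact hne rfl
    | left => rw [Set.inter_comm]; exact left_disjoint (by omega) hj (by omega)
    | right => rw [Set.inter_comm]; exact right_disjoint (by omega) hj (by omega)
  | left =>
    cases h' with
    | arc h' hl => have := h'.lt; exact left_disjoint (by omega) hl (by omega)
    | left => exact absurd rfl hne
    | right => exact left_right_disjoint hN
  | right =>
    cases h' with
    | arc h' hl => have := h'.lt; exact right_disjoint (by omega) hl (by omega)
    | left => rw [Set.inter_comm]; exact left_right_disjoint hN
    | right => exact absurd rfl hne

lemma IsArc.ne {N : ℕ} {a b : Pt} (h : IsArc N a b) : a ≠ b := by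
  cases h with
  | arc h hj => exact fun e => h.lt.ne (vtx_injective N e)
  | left => exact apex_ne_vtx N 0
  | right => exact apex_ne_vtx N N

lemma IsArc.vtx_notMem {N : ℕ} {a b : Pt} (h : IsArc N a b) {m : ℕ} (hm : m ≤ N) :
    vtx N m ∉ openSegment ℝ a b := by
  intro hmem
  have hself : vtx N m ∈ openSegment ℝ (vtx N m) (vtx N m) := by simp
  by_cases ha : vtx N m = a
  · rw [ha, left_mem_openSegment_iff] at hmem
    exact h.ne hmem
  by_cases hb : vtx N m = b
  · rw [hb, right_mem_openSegment_iff] at hmem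
    exact h.ne hmem
  have key : ∀ {S T : Set Pt}, S ∩ T = ∅ → vtx N m ∈ S → vtx N m ∈ T → False :=
    fun e h1 h2 => (Set.eq_empty_iff_forall_notMem.1 e _) ⟨h1, h2⟩
  cases h with
  | @arc i j h hj =>
    have hij := h.lt
    have hi' : m ≠ i := fun e => ha (by rw [e])
    have hj' : m ≠ j := fun e => hb (by rw [e])
    rcases lt_or_gt_of_ne hi' with h1 | h1
    · exact key (strip_disjoint N le_rfl h1.le hij.le (by omega)) hself hmem
    rcases lt_or_gt_of_ne hj' with h2 | h2
    · have hp : i % 2 = j % 2 := by unfold Arc at h; omega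
      exact key (chord_disjoint N hp h1.le le_rfl h2.le (by omega)) hself hmem
    · exact key (strip_disjoint N hij.le h2.le le_rfl (by omega)) hmem hself
  | left =>
    have : m ≠ 0 := fun e => hb (by rw [e])
    exact key (left_disjoint hm hm (by omega)) hmem hself
  | right =>
    have : m ≠ N := fun e => hb (by rw [e])
    exact key (right_disjoint hm hm (by omega)) hmem hself

lemma IsArc.apex_notMem {N : ℕ} {a b : Pt} (h : IsArc N a b) : apex N ∉ openSegment ℝ a b := by
  cases h with
  | @arc i j h hj =>
    rintro ⟨u, v, hu, hv, -, e⟩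
    have h1 := congrArg Prod.fst e
    simp only [Prod.fst_add, Prod.smul_fst, smul_eq_mul, vtx, apex] at h1
    have := mul_nonneg hu.le (i.cast_nonneg (α := ℝ))
    have := mul_nonneg hv.le (j.cast_nonneg (α := ℝ))
    linarith
  | left => rw [left_mem_openSegment_iff]; exact apex_ne_vtx N 0
  | right => rw [left_mem_openSegment_iff]; exact apex_ne_vtx N N

/-- The vertex set. -/
def vertices (N : ℕ) : Finset Pt := insert (apex N) ((Finset.range (N + 1)).image (vtx N))

/-- The edge set. -/
def edges (N : ℕ) : Finset (Sym2 Pt) :=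
  {s(apex N, vtx N 0), s(apex N, vtx N N)} ∪
    (((Finset.range (N + 1)) ×ˢ (Finset.range (N + 1))).filter (fun p => Arc p.1 p.2)).image
      (fun p => s(vtx N p.1, vtx N p.2))

lemma IsArc.mem_edges {N : ℕ} {a b : Pt} (h : IsArc N a b) : s(a, b) ∈ edges N := by
  cases h with
  | @arc i j h hj =>
    have := h.lt
    refine Finset.mem_union_right _ (Finset.mem_image.2 ⟨(i, j), ?_, rfl⟩)
    simp only [Finset.mem_filter, Finset.mem_product, Finset.mem_range]
    exact ⟨by omega, h⟩
  | left => simp [edges]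
  | right => simp [edges]

lemma exists_isArc_of_mem_edges {N : ℕ} {a b : Pt} (h : s(a, b) ∈ edges N) :
    ∃ c d, IsArc N c d ∧ s(a, b) = s(c, d) := by
  simp only [edges, Finset.mem_union, Finset.mem_insert, Finset.mem_singleton, Finset.mem_image,
    Finset.mem_filter, Finset.mem_product, Finset.mem_range] at h
  rcases h with (h | h) | ⟨⟨i, j⟩, ⟨⟨_, hj⟩, hij⟩, h⟩
  · exact ⟨_, _, .left, h⟩
  · exact ⟨_, _, .right, h⟩
  · exact ⟨_, _, .arc hij (by simpa [Nat.lt_succ_iff] using hj), h.symm⟩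

lemma IsArc.mem_vertices {N : ℕ} {a b : Pt} (h : IsArc N a b) :
    a ∈ vertices N ∧ b ∈ vertices N := by
  have key : ∀ i ≤ N, vtx N i ∈ vertices N := fun i hi =>
    Finset.mem_insert_of_mem (Finset.mem_image_of_mem _ (Finset.mem_range.2 (by omega)))
  cases h with
  | @arc i j h hj => exact ⟨key i (h.lt.le.trans hj), key j hj⟩
  | left => exact ⟨Finset.mem_insert_self _ _, key _ (Nat.zero_le _)⟩
  | right => exact ⟨Finset.mem_insert_self _ _, key _ le_rfl⟩

lemma openSegment_congr {a b c d : Pt} (h : s(a, b) = s(c, d)) :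
    openSegment ℝ a b = openSegment ℝ c d := by
  rcases Sym2.eq_iff.1 h with ⟨rfl, rfl⟩ | ⟨rfl, rfl⟩
  · rfl
  · exact openSegment_symm ℝ a b

lemma validEdges {N : ℕ} (hN : 0 < N) : ValidEdges (vertices N) (edges N) := by
  refine ⟨fun a b h => ?_, fun a b h v hv => ?_, fun a b c d h h' hne => ?_⟩
  · obtain ⟨c, d, hcd, e⟩ := exists_isArc_of_mem_edges h
    have hm := hcd.mem_vertices
    have hn := hcd.ne
    rcases Sym2.eq_iff.1 e with ⟨rfl, rfl⟩ | ⟨rfl, rfl⟩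
    · exact ⟨hm.1, hm.2, hn⟩
    · exact ⟨hm.2, hm.1, hn.symm⟩
  · obtain ⟨c, d, hcd, e⟩ := exists_isArc_of_mem_edges h
    rw [openSegment_congr e]
    simp only [vertices, Finset.mem_insert, Finset.mem_image, Finset.mem_range] at hv
    rcases hv with rfl | ⟨m, hm, rfl⟩
    · exact hcd.apex_notMem
    · exact hcd.vtx_notMem (by omega)
  · obtain ⟨a', b', hab, e⟩ := exists_isArc_of_mem_edges h
    obtain ⟨c', d', hcd, e'⟩ := exists_isArc_of_mem_edges h'
    rw [openSegment_congr e, openSegment_congr e']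
    exact hab.disjoint hN hcd (by rwa [← e, ← e'])

/-- The plane graph on `N + 2` points. -/
def planeGraph (N : ℕ) (hN : 0 < N) : PSLG := ⟨vertices N, edges N, validEdges hN⟩

lemma card_vertices (N : ℕ) : (vertices N).card = N + 2 := by
  rw [vertices, Finset.card_insert_of_notMem, Finset.card_image_of_injective _ (vtx_injective N),
    Finset.card_range]
  simp only [Finset.mem_image, not_exists, not_and]
  exact fun i _ h => apex_ne_vtx N i h.symm

/-! ### Star-shapedness -/

/-- The polygonal curve through the points of `a :: t`. -/
def polyline : Pt → List Pt → Set Pt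
  | a, [] => {a}
  | a, b :: t => segment ℝ a b ∪ polyline b t

lemma head_mem_polyline (a : Pt) (t : List Pt) : a ∈ polyline a t := by
  cases t with
  | nil => exact rfl
  | cons b t => exact Or.inl (left_mem_segment ℝ a b)

lemma iUnion_zip_segment (w a : Pt) (t : List Pt) :
    (⋃ p ∈ (a :: t).zip (t ++ [w]), segment ℝ p.1 p.2) =
      polyline a t ∪ segment ℝ (t.getLastD a) w := by
  induction t generalizing a with
  | nil =>
    have : a ∈ segment ℝ a w := left_mem_segment ℝ a w
    simp [polyline, this]
  | cons b t ih =>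
    rw [List.cons_append, List.zip_cons_cons, polyline, List.getLastD_cons, Set.union_assoc,
      ← ih b]
    simp

lemma cycleBody_eq (w a : Pt) (t : List Pt) :
    cycleBody (w :: a :: t) =
      segment ℝ w a ∪ (polyline a t ∪ segment ℝ (t.getLastD a) w) := by
  rw [← iUnion_zip_segment]
  simp [cycleBody, cyclePairs]

lemma forall_zip_of_isChain {r : Pt → Pt → Prop} {w a : Pt} {t : List Pt}
    (h : (a :: t).IsChain r) (hw : r (t.getLastD a) w) :
    ∀ p ∈ (a :: t).zip (t ++ [w]), r p.1 p.2 := by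
  induction t generalizing a with
  | nil => simpa using hw
  | cons b t ih =>
    rw [List.cons_append, List.zip_cons_cons]
    rw [List.getLastD_cons] at hw
    rw [List.isChain_cons_cons] at h
    intro p hp
    rcases List.mem_cons.1 hp with rfl | hp
    · exact h.1
    · exact ih h.2 hw p hp

/-- Going on along the curve, points of the lower half-plane turn clockwise about the origin. -/
def Clockwise (a b : Pt) : Prop := a.2 < 0 ∧ b.2 < 0 ∧ 0 < crossp b a

lemma Clockwise.neg {a b : Pt} (h : Clockwise a b) {s : ℝ} (ha : a.1 + s * a.2 ≤ 0) :
    b.1 + s * b.2 < 0 := by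
  obtain ⟨h1, h2, h3⟩ := h
  unfold crossp at h3
  by_contra! hb
  nlinarith

lemma polyline_neg {a : Pt} {t : List Pt} (h : (a :: t).IsChain Clockwise) {s : ℝ}
    (ha : a.1 + s * a.2 < 0) {p : Pt} (hp : p ∈ polyline a t) : p.1 + s * p.2 < 0 := by
  induction t generalizing a with
  | nil => obtain rfl : p = a := hp; exact ha
  | cons b t ih =>
    rw [List.isChain_cons_cons] at h
    have hb := h.1.neg ha.le
    rcases hp with ⟨u, v, hu, hv, huv, rfl⟩ | hp
    · simp only [Prod.fst_add, Prod.snd_add, Prod.smul_fst, Prod.smul_snd, smul_eq_mul]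
      rcases hu.eq_or_lt with rfl | hu
      · obtain rfl : v = 1 := by linarith
        linarith
      · nlinarith [mul_neg_of_pos_of_neg hu ha, mul_nonpos_of_nonneg_of_nonpos hv hb.le]
    · exact ih h.2 hb hp

/-- On a segment whose line misses the origin, each ray has at most one point. -/
lemma eq_of_mem_segment {a b p q : Pt} (h : crossp a b ≠ 0) (hp : p ∈ segment ℝ a b)
    (hq : q ∈ segment ℝ a b) {c : ℝ} (hc : q = c • p) : p = q := by
  obtain ⟨u, v, hu, hv, huv, rfl⟩ := hp
  obtain ⟨u', v', hu', hv', huv', rfl⟩ := hq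
  have h1 := congrArg Prod.fst hc
  have h2 := congrArg Prod.snd hc
  simp only [Prod.fst_add, Prod.snd_add, Prod.smul_fst, Prod.smul_snd, smul_eq_mul] at h1 h2
  unfold crossp at h
  have e1 : (v' - c * v) * (a.1 * b.2 - a.2 * b.1) = 0 := by
    linear_combination a.1 * h2 - a.2 * h1
  have e2 : (u' - c * u) * (a.1 * b.2 - a.2 * b.1) = 0 := by
    linear_combination b.2 * h1 - b.1 * h2
  have e1' := (mul_eq_zero.1 e1).resolve_right h
  have e2' := (mul_eq_zero.1 e2).resolve_right h
  obtain rfl : c = 1 := by linear_combination (-1) * e1' - e2' + huv' - c * huv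
  rw [one_smul] at hc
  exact hc.symm

lemma polyline_snd_neg {a : Pt} {t : List Pt} (h : (a :: t).IsChain Clockwise) (ha : a.2 < 0)
    {p : Pt} (hp : p ∈ polyline a t) : p.2 < 0 := by
  induction t generalizing a with
  | nil => obtain rfl : p = a := hp; exact ha
  | cons b t ih =>
    rw [List.isChain_cons_cons] at h
    rcases hp with ⟨u, v, hu, hv, huv, rfl⟩ | hp
    · simp only [Prod.snd_add, Prod.smul_snd, smul_eq_mul]
      have hb := h.1.2.1
      rcases hu.eq_or_lt with rfl | hu
      · obtain rfl : v = 1 := by linarith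
        linarith
      · nlinarith [mul_neg_of_pos_of_neg hu ha, mul_nonpos_of_nonneg_of_nonpos hv hb.le]
    · exact ih h.2 h.1.2.1 hp

/-- Two zeros in the lower half-plane of the same functional lie on a common ray. -/
lemma eq_smul_of_zero {s : ℝ} {p q : Pt} (hp : p.1 + s * p.2 = 0) (hp' : p.2 < 0)
    (hq : q.1 + s * q.2 = 0) : q = (q.2 / p.2) • p := by
  have : p.2 ≠ 0 := hp'.ne
  ext
  · simp only [Prod.smul_fst, smul_eq_mul]
    field_simp
    linear_combination p.2 * hq - q.2 * hp
  · simp only [Prod.smul_snd, smul_eq_mul]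
    field_simp

lemma polyline_unique {a : Pt} {t : List Pt} (h : (a :: t).IsChain Clockwise) {s : ℝ} {p q : Pt}
    (hp : p ∈ polyline a t) (hq : q ∈ polyline a t) (hp0 : p.1 + s * p.2 = 0)
    (hq0 : q.1 + s * q.2 = 0) : p = q := by
  induction t generalizing a p q with
  | nil => exact (show p = a from hp).trans (show q = a from hq).symm
  | cons b t ih =>
    have h' := List.isChain_cons_cons.1 h
    have mixed : ∀ {p q : Pt}, p ∈ segment ℝ a b → q ∈ polyline b t → p.1 + s * p.2 = 0 →
        q.1 + s * q.2 = 0 → p = q := by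
      intro p q hp hq hp0 hq0
      have hb : 0 ≤ b.1 + s * b.2 := by
        by_contra! hb
        exact (polyline_neg h'.2 hb hq).ne hq0
      have ha : 0 < a.1 + s * a.2 := by
        by_contra! ha
        exact (h'.1.neg ha).not_ge hb
      obtain ⟨u, v, hu, hv, huv, rfl⟩ := hp
      have e : u * (a.1 + s * a.2) + v * (b.1 + s * b.2) = 0 := by
        simp only [Prod.fst_add, Prod.snd_add, Prod.smul_fst, Prod.smul_snd, smul_eq_mul] at hp0
        linear_combination hp0
      have hu0 : u = 0 := by
        by_contra hne
        have := mul_pos (lt_of_le_of_ne hu (Ne.symm hne)) ha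
        linarith [mul_nonneg hv hb]
      obtain rfl : v = 1 := by linarith
      subst hu0
      simp only [zero_smul, one_smul, zero_add] at hp0 ⊢
      exact ih h'.2 (head_mem_polyline b t) hq hp0 hq0
    have hcr : crossp a b ≠ 0 := by
      have := h'.1.2.2
      unfold crossp at this ⊢
      intro e
      linarith
    have hneg : ∀ {x : Pt}, x ∈ polyline a (b :: t) → x.2 < 0 := polyline_snd_neg h h'.1.1
    rcases id hp with hp1 | hp1 <;> rcases id hq with hq1 | hq1
    · exact eq_of_mem_segment hcr hp1 hq1 (eq_smul_of_zero hp0 (hneg hp) hq0)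
    · exact mixed hp1 hq1 hp0 hq0
    · exact (mixed hq1 hp1 hq0 hp0).symm
    · exact ih h'.2 hp1 hq1 hp0 hq0

lemma exists_zero_segment {a b : Pt} {s : ℝ} (ha : 0 ≤ a.1 + s * a.2) (hb : b.1 + s * b.2 ≤ 0) :
    ∃ p ∈ segment ℝ a b, p.1 + s * p.2 = 0 := by
  rcases ha.eq_or_lt with h | h
  · exact ⟨a, left_mem_segment ℝ a b, h.symm⟩
  have hpos : 0 < (a.1 + s * a.2) - (b.1 + s * b.2) := by linarith
  refine ⟨(-(b.1 + s * b.2) / ((a.1 + s * a.2) - (b.1 + s * b.2))) • a +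
    ((a.1 + s * a.2) / ((a.1 + s * a.2) - (b.1 + s * b.2))) • b,
    ⟨_, _, div_nonneg (by linarith) hpos.le, div_nonneg ha hpos.le, ?_, rfl⟩, ?_⟩
  · field_simp
    ring
  · simp only [Prod.fst_add, Prod.snd_add, Prod.smul_fst, Prod.smul_snd, smul_eq_mul]
    field_simp
    ring

lemma polyline_exists {a : Pt} {t : List Pt} {s : ℝ} (ha : 0 ≤ a.1 + s * a.2)
    (hl : (t.getLastD a).1 + s * (t.getLastD a).2 ≤ 0) :
    ∃ p ∈ polyline a t, p.1 + s * p.2 = 0 := by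
  induction t generalizing a with
  | nil => exact ⟨a, rfl, le_antisymm hl ha⟩
  | cons b t ih =>
    rw [List.getLastD_cons] at hl
    rcases le_total 0 (b.1 + s * b.2) with hb | hb
    · obtain ⟨p, hp, hp0⟩ := ih hb hl
      exact ⟨p, Or.inr hp, hp0⟩
    · obtain ⟨p, hp, hp0⟩ := exists_zero_segment ha hb
      exact ⟨p, Or.inl hp, hp0⟩

lemma getLastD_mem_polyline (a : Pt) (t : List Pt) : t.getLastD a ∈ polyline a t := by
  induction t generalizing a with
  | nil => exact rfl
  | cons b t ih => rw [List.getLastD_cons]; exact Or.inr (ih b)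

lemma polyline_pos {a : Pt} {t : List Pt} (h : (a :: t).IsChain Clockwise) {s : ℝ}
    (hl : 0 < (t.getLastD a).1 + s * (t.getLastD a).2) {p : Pt} (hp : p ∈ polyline a t) :
    0 < p.1 + s * p.2 := by
  induction t generalizing a p with
  | nil => obtain rfl : p = a := hp; exact hl
  | cons b t ih =>
    rw [List.isChain_cons_cons] at h
    rw [List.getLastD_cons] at hl
    rcases hp with ⟨u, v, hu, hv, huv, rfl⟩ | hp
    · have hb := ih h.2 hl (head_mem_polyline b t)
      have ha : 0 < a.1 + s * a.2 := by
        by_contra! ha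
        exact (h.1.neg ha).not_gt hb
      simp only [Prod.fst_add, Prod.snd_add, Prod.smul_fst, Prod.smul_snd, smul_eq_mul]
      rcases hu.eq_or_lt with rfl | hu
      · obtain rfl : v = 1 := by linarith
        linarith
      · nlinarith [mul_pos hu ha, mul_nonneg hv hb.le]
    · exact ih h.2 hl hp

/-- A ray in the closed cone spanned by `a` and `b` meets the segment from `a` to `b`. -/
lemma exists_mem_segment_ray {a b d : Pt} (hd : d ≠ 0) (hab : 0 < crossp a b)
    (ha : 0 ≤ crossp a d) (hb : 0 ≤ crossp d b) :
    ∃ p ∈ segment ℝ a b, ∃ t : ℝ, 0 ≤ t ∧ p = t • d := by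
  have e1 : crossp a b * d.1 = crossp d b * a.1 + crossp a d * b.1 := by unfold crossp; ring
  have e2 : crossp a b * d.2 = crossp d b * a.2 + crossp a d * b.2 := by unfold crossp; ring
  have hpos : 0 < crossp a d + crossp d b := by
    rcases (add_nonneg ha hb).eq_or_lt with h | h
    · exfalso
      have h1 : crossp a d = 0 := by linarith
      have h2 : crossp d b = 0 := by linarith
      rw [h1, h2] at e1 e2
      apply hd
      ext
      · simpa [hab.ne'] using e1
      · simpa [hab.ne'] using e2
    · exact h
  refine ⟨(crossp d b / (crossp a d + crossp d b)) • a +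
      (crossp a d / (crossp a d + crossp d b)) • b,
    ⟨_, _, div_nonneg hb hpos.le, div_nonneg ha hpos.le, ?_, rfl⟩,
    crossp a b / (crossp a d + crossp d b), div_nonneg hab.le hpos.le, ?_⟩
  · field_simp
    ring
  · ext
    · simp only [Prod.fst_add, Prod.smul_fst, smul_eq_mul]
      field_simp
      linarith
    · simp only [Prod.snd_add, Prod.smul_snd, smul_eq_mul]
      field_simp
      linarith

/-- Points of a segment lie in the cone spanned by its endpoints. -/
lemma crossp_of_mem_segment {a b p : Pt} (hab : 0 < crossp a b) (hp : p ∈ segment ℝ a b) :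
    0 ≤ crossp a p ∧ 0 ≤ crossp p b ∧ (crossp a p = 0 → p = a) ∧ (crossp p b = 0 → p = b) := by
  obtain ⟨u, v, hu, hv, huv, rfl⟩ := hp
  have e1 : crossp a (u • a + v • b) = v * crossp a b := by
    simp only [crossp, Prod.fst_add, Prod.snd_add, Prod.smul_fst, Prod.smul_snd, smul_eq_mul]; ring
  have e2 : crossp (u • a + v • b) b = u * crossp a b := by
    simp only [crossp, Prod.fst_add, Prod.snd_add, Prod.smul_fst, Prod.smul_snd, smul_eq_mul]; ring
  rw [e1, e2]
  refine ⟨mul_nonneg hv hab.le, mul_nonneg hu hab.le, fun h => ?_, fun h => ?_⟩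
  · obtain rfl := (mul_eq_zero.1 h).resolve_right hab.ne'
    obtain rfl : u = 1 := by linarith
    simp
  · obtain rfl := (mul_eq_zero.1 h).resolve_right hab.ne'
    obtain rfl : v = 1 := by linarith
    simp

lemma crossp_smul_right (a p : Pt) (c : ℝ) : crossp a (c • p) = c * crossp a p := by
  simp only [crossp, Prod.smul_fst, Prod.smul_snd, smul_eq_mul]; ring

/-- The curve lies in the cone spanned by its last and its first point. -/
lemma polyline_cone {a : Pt} {t : List Pt} (h : (a :: t).IsChain Clockwise) (ha : a.2 < 0)
    {p : Pt} (hp : p ∈ polyline a t) :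
    0 ≤ crossp (t.getLastD a) p ∧ 0 ≤ crossp p a := by
  have hp2 : p.2 < 0 := polyline_snd_neg h ha hp
  have hz2 : (t.getLastD a).2 < 0 := polyline_snd_neg h ha (getLastD_mem_polyline a t)
  have e : ∀ q : Pt, q.1 + -p.1 / p.2 * q.2 = -crossp p q / p.2 := fun q => by
    have := hp2.ne
    unfold crossp
    field_simp
    ring
  have hp0 : p.1 + -p.1 / p.2 * p.2 = 0 := by rw [e]; simp [crossp, mul_comm]
  constructor
  · by_contra! hc
    refine (polyline_pos h (s := -p.1 / p.2) ?_ hp).ne' hp0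
    rw [e]
    refine div_pos_of_neg_of_neg ?_ hp2
    unfold crossp at hc ⊢
    linarith
  · by_contra! hc
    refine (polyline_neg h (s := -p.1 / p.2) ?_ hp).ne hp0
    rw [e]
    exact div_neg_of_pos_of_neg (by linarith) hp2

lemma polyline_ray_unique {a : Pt} {t : List Pt} (h : (a :: t).IsChain Clockwise) (ha : a.2 < 0)
    {p q : Pt} (hp : p ∈ polyline a t) (hq : q ∈ polyline a t) {c : ℝ} (hc : q = c • p) :
    p = q := by
  have hp2 : p.2 ≠ 0 := (polyline_snd_neg h ha hp).ne
  refine polyline_unique h (s := -p.1 / p.2) hp hq (by field_simp; ring) ?_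
  subst hc
  simp only [Prod.smul_fst, Prod.smul_snd, smul_eq_mul]
  field_simp
  ring

lemma polyline_ray_exists {a d : Pt} {t : List Pt} (h : (a :: t).IsChain Clockwise) (ha : a.2 < 0)
    (hza : 0 < crossp (t.getLastD a) a) (hd : d ≠ 0) (hzd : 0 ≤ crossp (t.getLastD a) d)
    (hda : 0 ≤ crossp d a) : ∃ p ∈ polyline a t, ∃ r : ℝ, 0 ≤ r ∧ p = r • d := by
  have hz2 : (t.getLastD a).2 < 0 := polyline_snd_neg h ha (getLastD_mem_polyline a t)
  obtain ⟨q, ⟨u, v, hu, hv, huv, hq⟩, r, hr, hqr⟩ := exists_mem_segment_ray hd hza hzd hda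
  have hq2 : q.2 < 0 := by
    rw [← hq]
    simp only [Prod.snd_add, Prod.smul_snd, smul_eq_mul]
    rcases hu.eq_or_lt with rfl | hu
    · obtain rfl : v = 1 := by linarith
      linarith
    · nlinarith [mul_neg_of_pos_of_neg hu hz2, mul_nonpos_of_nonneg_of_nonpos hv ha.le]
  have hd2 : d.2 < 0 := by
    rw [hqr] at hq2
    simp only [Prod.smul_snd, smul_eq_mul] at hq2
    by_contra! hd2
    exact (mul_nonneg hr hd2).not_gt hq2
  have e : ∀ q : Pt, q.1 + -d.1 / d.2 * q.2 = crossp d q / -d.2 := fun q => by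
    have := hd2.ne
    unfold crossp
    field_simp
    ring
  obtain ⟨p, hp, hp0⟩ := polyline_exists (a := a) (t := t) (s := -d.1 / d.2)
    (by rw [e]; exact div_nonneg hda (by linarith))
    (by
      rw [e]
      refine div_nonpos_of_nonpos_of_nonneg ?_ (by linarith)
      unfold crossp at hzd ⊢
      linarith)
  have hp2 : p.2 < 0 := polyline_snd_neg h ha hp
  refine ⟨p, hp, p.2 / d.2, (div_pos_of_neg_of_neg hp2 hd2).le,
    eq_smul_of_zero (s := -d.1 / d.2) ?_ hd2 hp0⟩
  have := hd2.ne
  field_simp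
  ring

/-- A clockwise curve in the lower half-plane, closed up by an apex such that the origin is
enclosed, meets each ray from the origin exactly once. -/
lemma starShaped_of_clockwise {w a : Pt} {t : List Pt} (h : (a :: t).IsChain Clockwise)
    (ha : a.2 < 0) (hza : 0 < crossp (t.getLastD a) a) (haw : 0 < crossp a w)
    (hwz : 0 < crossp w (t.getLastD a)) {d : Pt} (hd : d ≠ 0) :
    ∃! p : Pt, p ∈ cycleBody (w :: a :: t) ∧ ∃ r : ℝ, 0 ≤ r ∧ p = (0 : Pt) + r • d := by
  have hpoly : ∀ p ∈ polyline a t, 0 ≤ crossp (t.getLastD a) p ∧ 0 ≤ crossp p a :=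
    fun p hp => polyline_cone h ha hp
  have hray : ∀ {p q : Pt} {c : ℝ}, p ∈ polyline a t → q ∈ polyline a t → q = c • p → p = q :=
    fun hp hq hc => polyline_ray_unique h ha hp hq hc
  have hzmem := getLastD_mem_polyline a t
  have hamem := head_mem_polyline a t
  have hex := polyline_ray_exists h ha hza hd
  have hsnd : ∀ p ∈ polyline a t, p.2 < 0 := fun p hp => polyline_snd_neg h ha hp
  simp only [cycleBody_eq, zero_add]
  rw [segment_symm ℝ w a, segment_symm ℝ (t.getLastD a) w]
  generalize t.getLastD a = z at *
  generalize polyline a t = P at *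
  have swap : ∀ x y : Pt, crossp x y = -crossp y x := fun x y => by unfold crossp; ring
  have mixed : ∀ {p q : Pt} {c : ℝ}, 0 < c → q = c • p →
      ((p ∈ segment ℝ a w → q ∈ P → p = q) ∧ (p ∈ segment ℝ w z → q ∈ P → p = q) ∧
        (p ∈ segment ℝ a w → q ∈ segment ℝ w z → p = q)) := by
    rintro p q c hc rfl
    refine ⟨fun hp hq => ?_, fun hp hq => ?_, fun hp hq => ?_⟩
    · obtain ⟨h1, -, h2, -⟩ := crossp_of_mem_segment haw hp
      have h3 := (hpoly _ hq).2
      rw [swap, crossp_smul_right] at h3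
      obtain rfl := h2 (by nlinarith)
      exact hray hamem hq rfl
    · obtain ⟨-, h1, -, h2⟩ := crossp_of_mem_segment hwz hp
      have h3 := (hpoly _ hq).1
      rw [crossp_smul_right, swap] at h3
      obtain rfl := h2 (by nlinarith)
      exact hray hzmem hq rfl
    · obtain ⟨-, h1, -, h2⟩ := crossp_of_mem_segment haw hp
      obtain ⟨h3, -, h4, -⟩ := crossp_of_mem_segment hwz hq
      rw [crossp_smul_right, swap] at h3 h4
      exact (h2 (by nlinarith)).trans (h4 (by nlinarith)).symm
  have unique : ∀ {p q : Pt} {c : ℝ}, 0 < c → q = c • p →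
      p ∈ segment ℝ a w ∪ (P ∪ segment ℝ w z) → q ∈ segment ℝ a w ∪ (P ∪ segment ℝ w z) →
      p = q := by
    intro p q c hc hq hpm hqm
    have hp : p = c⁻¹ • q := by rw [hq, smul_smul, inv_mul_cancel₀ hc.ne', one_smul]
    have m := mixed hc hq
    have m' := mixed (inv_pos.2 hc) hp
    rcases hpm with hpm | hpm | hpm <;> rcases hqm with hqm | hqm | hqm
    · exact eq_of_mem_segment haw.ne' hpm hqm hq
    · exact m.1 hpm hqm
    · exact m.2.2 hpm hqm
    · exact (m'.1 hqm hpm).symm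
    · exact hray hpm hqm hq
    · exact (m'.2.1 hqm hpm).symm
    · exact (m'.2.2 hqm hpm).symm
    · exact m.2.1 hpm hqm
    · exact eq_of_mem_segment hwz.ne' hpm hqm hq
  have nonzero : (0 : Pt) ∉ segment ℝ a w ∪ (P ∪ segment ℝ w z) := by
    rintro (h0 | h0 | h0)
    · have := (crossp_of_mem_segment haw h0).2.2.1 (by simp [crossp])
      rw [← this] at haw
      simp [crossp] at haw
    · simpa using hsnd _ h0
    · have := (crossp_of_mem_segment hwz h0).2.2.1 (by simp [crossp])
      rw [← this] at hwz
      simp [crossp] at hwz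
  refine existsUnique_of_exists_of_unique ?_ ?_
  · have e : crossp w z * crossp a d + crossp z a * crossp w d + crossp a w * crossp z d = 0 := by
      unfold crossp; ring
    rcases le_or_gt 0 (crossp a d) with h1 | h1
    · rcases le_or_gt (crossp w d) 0 with h2 | h2
      · obtain ⟨p, hp, r, hr, e⟩ := exists_mem_segment_ray hd haw h1 (by rw [swap]; linarith)
        exact ⟨p, Or.inl hp, r, hr, e⟩
      · have h3 : crossp z d ≤ 0 := by
          by_contra! h3
          linarith [mul_nonneg hwz.le h1, mul_pos hza h2, mul_pos haw h3]
        obtain ⟨p, hp, r, hr, e⟩ := exists_mem_segment_ray hd hwz h2.le (by rw [swap]; linarith)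
        exact ⟨p, Or.inr (Or.inr hp), r, hr, e⟩
    · rcases le_or_gt 0 (crossp z d) with h2 | h2
      · obtain ⟨p, hp, r, hr, e⟩ := hex h2 (by rw [swap]; linarith)
        exact ⟨p, Or.inr (Or.inl hp), r, hr, e⟩
      · have h3 : 0 ≤ crossp w d := by
          by_contra! h3
          linarith [mul_neg_of_pos_of_neg hwz h1, mul_neg_of_pos_of_neg hza h3,
            mul_neg_of_pos_of_neg haw h2]
        obtain ⟨p, hp, r, hr, e⟩ := exists_mem_segment_ray hd hwz h3 (by rw [swap]; linarith)
        exact ⟨p, Or.inr (Or.inr hp), r, hr, e⟩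
  · rintro p q ⟨hp, r, hr, rfl⟩ ⟨hq, r', hr', rfl⟩
    have hr0 : r ≠ 0 := by
      rintro rfl
      rw [zero_smul] at hp
      exact nonzero hp
    have hr0' : r' ≠ 0 := by
      rintro rfl
      rw [zero_smul] at hq
      exact nonzero hq
    have hrp := lt_of_le_of_ne hr hr0.symm
    have hrp' := lt_of_le_of_ne hr' hr0'.symm
    refine unique (c := r' / r) (by positivity) ?_ hp hq
    rw [smul_smul, div_mul_cancel₀ _ hr0]

/-! ### Polygons from paths -/

lemma vtx_snd_neg {N i : ℕ} (h : i ≤ N) : (vtx N i).2 < 0 := by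
  have h1 := disp_le h
  have h0 : (0 : ℝ) ≤ N := N.cast_nonneg
  simp only [vtx, height]
  nlinarith [sq_nonneg (N : ℝ)]

lemma crossp_vtx_pos {N i j : ℕ} (hij : i < j) (hj : j ≤ N) :
    0 < crossp (vtx N i) (vtx N j) := by
  have h1 : (i : ℝ) + 1 ≤ j := by exact_mod_cast hij
  have h2 : (j : ℝ) ≤ N := by exact_mod_cast hj
  have h0 : (0 : ℝ) ≤ i := i.cast_nonneg
  have hD : (0 : ℝ) < 1 + (N : ℝ) ^ 2 := by positivity
  have e : crossp (vtx N i) (vtx N j) = height N * (j - i) + i * disp j - j * disp i := by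
    simp only [crossp, vtx]; ring
  have b1 : -(i * (1 + (N : ℝ) ^ 2)) ≤ i * disp j := by
    nlinarith [mul_le_mul_of_nonneg_left (neg_le_disp hj) h0]
  have b2 : j * disp i ≤ j * (1 + (N : ℝ) ^ 2) :=
    mul_le_mul_of_nonneg_left (disp_le (hij.le.trans hj)) (by linarith)
  have b3 : height N ≤ height N * (j - i) := by
    have : 0 ≤ height N := by unfold height; positivity
    nlinarith
  have b4 : (i + j : ℝ) * (1 + (N : ℝ) ^ 2) < height N := by
    unfold height
    exact mul_lt_mul_of_pos_right (by linarith) hD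
  rw [e]
  linarith

lemma clockwise_of_arc {N i j : ℕ} (h : Arc j i) (hi : i ≤ N) :
    Clockwise (vtx N i) (vtx N j) :=
  ⟨vtx_snd_neg hi, vtx_snd_neg (h.lt.le.trans hi), crossp_vtx_pos h.lt hi⟩

lemma crossp_last_apex {N : ℕ} (hN : 8 ≤ N) : 0 < crossp (vtx N N) (apex N) := by
  have h8 : (8 : ℝ) ≤ N := by exact_mod_cast hN
  have h1 := neg_le_disp le_rfl (i := N)
  have e : crossp (vtx N N) (apex N) = height N * N + disp N - height N := by
    simp only [crossp, vtx, apex]; ring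
  rw [e]
  unfold height
  nlinarith [mul_pos (show (0 : ℝ) < N - 1 by linarith)
    (show (0 : ℝ) < 1 + (N : ℝ) ^ 2 by positivity), sq_nonneg (N : ℝ)]

lemma crossp_apex_zero (N : ℕ) : 0 < crossp (apex N) (vtx N 0) := by
  have h := vtx_snd_neg (Nat.zero_le N)
  have e : crossp (apex N) (vtx N 0) = -(vtx N 0).2 := by
    simp only [crossp, vtx, apex]; push_cast; ring
  rw [e]
  linarith

lemma getLastD_map (f : ℕ → Pt) (i : ℕ) (t : List ℕ) :
    (t.map f).getLastD (f i) = f (t.getLastD i) := by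
  induction t generalizing i with
  | nil => rfl
  | cons j t ih => rw [List.map_cons, List.getLastD_cons, List.getLastD_cons, ih]

lemma IsDescent.pairwise {i : ℕ} {t : List ℕ} (h : IsDescent i t) : (i :: t).Pairwise (· > ·) :=
  List.isChain_iff_pairwise.1 (h.1.imp fun _ _ hab => hab.lt)

lemma IsDescent.le {i : ℕ} {t : List ℕ} (h : IsDescent i t) {m : ℕ} (hm : m ∈ i :: t) : m ≤ i := by
  rcases List.mem_cons.1 hm with rfl | hm
  · exact le_rfl
  · exact ((List.pairwise_cons.1 h.pairwise).1 m hm).le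

/-- The closed walk of a descent. -/
def polygon (N : ℕ) (t : List ℕ) : List Pt := apex N :: vtx N N :: t.map (vtx N)

lemma IsDescent.isChain_map {N : ℕ} {t : List ℕ} (h : IsDescent N t) {r : Pt → Pt → Prop}
    (hr : ∀ i j, i ≤ N → Arc j i → r (vtx N i) (vtx N j)) :
    (vtx N N :: t.map (vtx N)).IsChain r := by
  rw [← List.map_cons, List.isChain_map]
  have key : ∀ l : List ℕ, (∀ m ∈ l, m ≤ N) → l.IsChain (fun a b => Arc b a) →
      l.IsChain (fun a b => r (vtx N a) (vtx N b)) := by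
    intro l
    induction l with
    | nil => simp
    | cons a l ih =>
      cases l with
      | nil => simp
      | cons b l =>
        intro hm hc
        rw [List.isChain_cons_cons] at hc ⊢
        exact ⟨hr a b (hm a (by simp)) hc.1,
          ih (fun m hm' => hm m (List.mem_cons_of_mem _ hm')) hc.2⟩
  exact key _ (fun m hm => h.le hm) h.1

lemma IsDescent.isStarShapedPolygon {N : ℕ} (hN : 8 ≤ N) {t : List ℕ} (h : IsDescent N t) :
    IsStarShapedPolygon (planeGraph N (by omega)) (polygon N t) := by
  have hlast : (t.map (vtx N)).getLastD (vtx N N) = vtx N 0 := by rw [getLastD_map, h.2]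
  refine ⟨⟨?_, ?_, ?_⟩, 0, fun d hd => ?_⟩
  · cases t with
    | nil => have := h.2; simp at this; omega
    | cons j t => simp [polygon]
  · rw [polygon, ← List.map_cons, List.nodup_cons]
    refine ⟨fun hm => ?_, ?_⟩
    · obtain ⟨m, -, hm⟩ := List.mem_map.1 hm
      exact apex_ne_vtx N m hm.symm
    · exact (h.pairwise.imp fun {a b} (hab : a > b) => hab.ne').map (vtx N)
        fun a b hab e => hab (vtx_injective N e)
  · have e : cyclePairs (polygon N t) = (apex N, vtx N N) ::
        (vtx N N :: t.map (vtx N)).zip (t.map (vtx N) ++ [apex N]) := by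
      simp [cyclePairs, polygon]
    rw [e]
    intro p hp
    rcases List.mem_cons.1 hp with rfl | hp
    · exact IsArc.right.mem_edges
    · refine forall_zip_of_isChain (r := fun a b => s(a, b) ∈ edges N) ?_ ?_ p hp
      · refine h.isChain_map fun i j hi hij => ?_
        rw [Sym2.eq_swap]
        exact (IsArc.arc hij hi).mem_edges
      · rw [hlast, Sym2.eq_swap]
        exact IsArc.left.mem_edges
  · refine starShaped_of_clockwise (h.isChain_map fun i j hi hij => clockwise_of_arc hij hi)
      (vtx_snd_neg le_rfl) ?_ (crossp_last_apex hN) ?_ hd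
    · rw [hlast]; exact crossp_vtx_pos (by omega) le_rfl
    · rw [hlast]; exact crossp_apex_zero N

lemma exists_mem_cycleEdgeSet_iff {L : List Pt} {v : Pt} :
    (∃ e ∈ cycleEdgeSet L, v ∈ e) ↔ v ∈ L := by
  simp only [cycleEdgeSet, List.mem_toFinset, List.mem_map]
  constructor
  · rintro ⟨e, ⟨⟨a, b⟩, hp, rfl⟩, hv⟩
    have h := List.of_mem_zip hp
    rw [List.mem_rotate] at h
    rcases Sym2.mem_iff.1 hv with rfl | rfl
    · exact h.1
    · exact h.2
  · intro hv
    rw [← List.map_fst_zip (l₁ := L) (l₂ := L.rotate 1) (by simp)] at hv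
    obtain ⟨p, hp, rfl⟩ := List.mem_map.1 hv
    exact ⟨_, ⟨p, hp, rfl⟩, Sym2.mem_mk_left _ _⟩

lemma polygon_injOn (N : ℕ) :
    Set.InjOn (fun t => cycleEdgeSet (polygon N t)) {t | IsDescent N t} := by
  intro t ht t' ht' h
  have key : ∀ {u u' : List ℕ}, cycleEdgeSet (polygon N u) = cycleEdgeSet (polygon N u') →
      ∀ m ∈ N :: u, m ∈ N :: u' := by
    intro u u' h m hm
    have h1 : vtx N m ∈ polygon N u := by
      rw [polygon, ← List.map_cons]
      exact List.mem_cons_of_mem _ (List.mem_map_of_mem hm)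
    rw [← exists_mem_cycleEdgeSet_iff, h, exists_mem_cycleEdgeSet_iff, polygon, ← List.map_cons,
      List.mem_cons] at h1
    rcases h1 with h1 | h1
    · exact absurd h1.symm (apex_ne_vtx N m)
    · obtain ⟨m', hm', e⟩ := List.mem_map.1 h1
      rwa [← vtx_injective N e]
  have hnd : ∀ {u}, IsDescent N u → (N :: u).Nodup := fun hu =>
    hu.pairwise.imp fun {a b} (hab : a > b) => hab.ne'
  have hperm : (N :: t).Perm (N :: t') :=
    (List.perm_ext_iff_of_nodup (hnd ht) (hnd ht')).2 fun m => ⟨key h m, key h.symm m⟩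
  have := hperm.eq_of_pairwise (fun a b _ _ (h1 : a > b) (h2 : b > a) => absurd h1 h2.asymm)
    (IsDescent.pairwise ht) (IsDescent.pairwise ht')
  exact (List.cons.inj this).2

lemma le_starCount {N : ℕ} (hN : 8 ≤ N) {x : ℝ} (hx : HasDescents N x) :
    x ≤ starCount (planeGraph N (by omega)) := by
  classical
  obtain ⟨F, hF, hcard⟩ := hx
  refine hcard.trans ?_
  rw [← Finset.card_image_of_injOn ((polygon_injOn N).mono hF), ← Set.ncard_coe_finset]
  refine Nat.cast_le.2 (Set.ncard_le_ncard ?_ ?_)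
  · intro E hE
    obtain ⟨t, ht, rfl⟩ := Finset.mem_image.1 hE
    exact ⟨_, (hF t ht).isStarShapedPolygon hN, rfl⟩
  · refine (edges N).powerset.finite_toSet.subset ?_
    rintro E ⟨L, hL, rfl⟩
    rw [Finset.mem_coe, Finset.mem_powerset]
    intro e he
    obtain ⟨p, hp, rfl⟩ := List.mem_map.1 (List.mem_toFinset.1 he)
    exact hL.1.2.2 p hp

/-- for infinitely many `n` there is a PSLG on `n` points containing at
least `c·1.7003ⁿ` star-shaped polygons, for an absolute constant `c > 0`. -/
theorem starShaped_lower_bound :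
    ∃ c : ℝ, 0 < c ∧ ∀ N : ℕ, ∃ n : ℕ, N ≤ n ∧
      ∃ G : PSLG, G.V.card = n ∧
        c * (1.7003 : ℝ) ^ n ≤ (starCount G : ℝ) := by
  refine ⟨20000 / 783709 / 1.7003 ^ 2, by norm_num, fun N => ?_⟩
  refine ⟨8 * (N + 1) + 2, by omega, planeGraph (8 * (N + 1)) (by omega),
    card_vertices _, ?_⟩
  refine le_trans (le_of_eq ?_) (le_starCount (by omega) (hasDescents_growth _))
  rw [growth_zero, weight, if_pos rfl, ← pow_mul, pow_add]
  field_simp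

end
end

section
/- Let S be a set of n ≥ 3 points in ℝ² with no three points collinear, let T be a triangulation of S, and let an arbitrary orientation of the edges of T be given. Then the oriented graph contains at least 3n − 5 directed simple paths. -/
open scoped BigOperators

noncomputable section

/-- A maximal plane graph in coordinates `X`, `Y`, with vertices in general position and with
pairwise distinct `X`-coordinates. -/
structure GenericTriangulation (α : Type*) where
  V : Finset α
  X : α → ℝ
  Y : α → ℝ
  A : α → α → Prop
  symm : ∀ {a b}, A a b → A b a
  mem : ∀ {a b}, A a b → a ∈ V
  ne : ∀ {a b}, A a b → a ≠ b
  injX : ∀ {a b}, a ∈ V → b ∈ V → a ≠ b → X a ≠ X b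
  gen : ∀ {a b c}, a ∈ V → b ∈ V → c ∈ V → a ≠ b → a ≠ c → b ≠ c →
    (X b - X a) * (Y c - Y a) - (Y b - Y a) * (X c - X a) ≠ 0
  noCross : ∀ {a b c d}, A a b → A c d →
    ((X b - X a) * (Y c - Y a) - (Y b - Y a) * (X c - X a)) *
      ((X b - X a) * (Y d - Y a) - (Y b - Y a) * (X d - X a)) < 0 →
    ((X d - X c) * (Y a - Y c) - (Y d - Y c) * (X a - X c)) *
      ((X d - X c) * (Y b - Y c) - (Y d - Y c) * (X b - X c)) < 0 → False
  cross : ∀ {a b}, a ∈ V → b ∈ V → a ≠ b → ¬ A a b → ∃ c d s t, A c d ∧ 0 < s ∧ s < 1 ∧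
    0 < t ∧ t < 1 ∧ (1 - s) * X a + s * X b = (1 - t) * X c + t * X d ∧
    (1 - s) * Y a + s * Y b = (1 - t) * Y c + t * Y d

namespace GenericTriangulation

variable {α : Type*} (T : GenericTriangulation α)

/-- The orientation (twice the signed area) of a triple of vertices. -/
def O (a b c : α) : ℝ :=
  (T.X b - T.X a) * (T.Y c - T.Y a) - (T.Y b - T.Y a) * (T.X c - T.X a)

/-- Reflection in the vertical axis. -/
def reflX : GenericTriangulation α where
  V := T.V
  X := fun a => - T.X a
  Y := T.Y
  A := T.A
  symm := T.symm
  mem := T.mem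
  ne := T.ne
  injX := fun ha hb hab h => T.injX ha hb hab (neg_injective h)
  gen := fun ha hb hc h1 h2 h3 h => T.gen ha hb hc h1 h2 h3 (by linarith)
  noCross := fun h1 h2 h3 h4 => T.noCross h1 h2 (by linarith) (by linarith)
  cross := fun ha hb hab h => by
    obtain ⟨c, d, s, t, h1, h2, h3, h4, h5, h6, h7⟩ := T.cross ha hb hab h
    exact ⟨c, d, s, t, h1, h2, h3, h4, h5, by linarith, h7⟩

/-- Reflection in the horizontal axis. -/
def reflY : GenericTriangulation α where
  V := T.V
  X := T.X
  Y := fun a => - T.Y a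
  A := T.A
  symm := T.symm
  mem := T.mem
  ne := T.ne
  injX := T.injX
  gen := fun ha hb hc h1 h2 h3 h => T.gen ha hb hc h1 h2 h3 (by linarith)
  noCross := fun h1 h2 h3 h4 => T.noCross h1 h2 (by linarith) (by linarith)
  cross := fun ha hb hab h => by
    obtain ⟨c, d, s, t, h1, h2, h3, h4, h5, h6, h7⟩ := T.cross ha hb hab h
    exact ⟨c, d, s, t, h1, h2, h3, h4, h5, h6, by linarith⟩

lemma reflX_O (a b c : α) : T.reflX.O a b c = - T.O a b c := by
  simp only [O, reflX]; ring

lemma reflY_O (a b c : α) : T.reflY.O a b c = - T.O a b c := by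
  simp only [O, reflY]; ring

lemma O_swap (a b c : α) : T.O b a c = - T.O a b c := by simp only [O]; ring

lemma O_swap_right (a b c : α) : T.O a c b = - T.O a b c := by simp only [O]; ring

lemma O_rotate (a b c : α) : T.O b c a = T.O a b c := by simp only [O]; ring

lemma O_self_left (a b : α) : T.O a b a = 0 := by simp only [O]; ring

lemma O_self_right (a b : α) : T.O a b b = 0 := by simp only [O]; ring

lemma O_eq_zero {a b c : α} (ha : a ∈ T.V) (hb : b ∈ T.V) (hc : c ∈ T.V) (hab : a ≠ b)
    (h : T.O a b c = 0) : c = a ∨ c = b := by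
  by_contra! hne
  exact T.gen ha hb hc hab hne.1.symm hne.2.symm h

/-- Barycentric interpolation of the affine function `T.O c d` in the triangle `a b v`. -/
lemma O_barycentric (a b v c d p : α) :
    T.O a b v * T.O c d p =
      T.O a b p * T.O c d v + T.O b v p * T.O c d a + T.O v a p * T.O c d b := by
  simp only [O]; ring

/-- Points on a common segment give equal values of `T.O p q`. -/
lemma O_combo {a b c d : α} {s t : ℝ}
    (hX : (1 - s) * T.X a + s * T.X b = (1 - t) * T.X c + t * T.X d)
    (hY : (1 - s) * T.Y a + s * T.Y b = (1 - t) * T.Y c + t * T.Y d) (p q : α) :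
    (1 - s) * T.O p q a + s * T.O p q b = (1 - t) * T.O p q c + t * T.O p q d := by
  simp only [O]
  linear_combination (T.X q - T.X p) * hY - (T.Y q - T.Y p) * hX

lemma neg_of_combo {s x y : ℝ} (hs : 0 < s) (hs1 : s < 1) (h : (1 - s) * x + s * y = 0)
    (hx : x ≠ 0) : x * y < 0 := by
  have hy : s * (x * y) = -((1 - s) * x ^ 2) := by linear_combination x * h
  have : 0 < (1 - s) * x ^ 2 := mul_pos (by linarith) (by positivity)
  by_contra! hc
  nlinarith [mul_nonneg hs.le hc]

/-- A missing edge is properly crossed by an edge, whose first endpoint may be taken on the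
right-hand side. -/
lemma exists_cross {a b : α} (ha : a ∈ T.V) (hb : b ∈ T.V) (hab : a ≠ b) (h : ¬ T.A a b) :
    ∃ c d s t, T.A c d ∧ 0 < s ∧ s < 1 ∧ 0 < t ∧ t < 1 ∧
      (∀ p q, (1 - s) * T.O p q a + s * T.O p q b = (1 - t) * T.O p q c + t * T.O p q d) ∧
      (1 - s) * T.X a + s * T.X b = (1 - t) * T.X c + t * T.X d ∧
      T.O a b c < 0 ∧ 0 < T.O a b d ∧ T.O c d a * T.O c d b < 0 := by
  obtain ⟨c, d, s, t, hcd, hs, hs1, ht, ht1, hX, hY⟩ := T.cross ha hb hab h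
  have hO := T.O_combo hX hY
  have hc := T.mem hcd
  have hd := T.mem (T.symm hcd)
  have h1 := hO a b
  rw [O_self_left, O_self_right] at h1
  have h2 := hO c d
  rw [O_self_left, O_self_right] at h2
  have hc0 : T.O a b c ≠ 0 := by
    intro h0
    have hd0 : T.O a b d = 0 := by
      have : t * T.O a b d = 0 := by rw [h0] at h1; linarith
      exact (mul_eq_zero.1 this).resolve_left ht.ne'
    have hne := T.ne hcd
    rcases T.O_eq_zero ha hb hc hab h0 with rfl | rfl <;>
      rcases T.O_eq_zero ha hb hd hab hd0 with rfl | rfl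
    · exact hne rfl
    · exact h hcd
    · exact h (T.symm hcd)
    · exact hne rfl
  have h1' : T.O a b c * T.O a b d < 0 := neg_of_combo ht ht1 (by linarith) hc0
  have ha0 : T.O c d a ≠ 0 := by
    intro h0
    rcases T.O_eq_zero hc hd ha (T.ne hcd) h0 with rfl | rfl
    · exact hc0 (T.O_self_left _ _)
    · rw [O_self_left] at h1'
      simp at h1'
  have h2' : T.O c d a * T.O c d b < 0 := neg_of_combo hs hs1 (by linarith) ha0
  rcases lt_or_gt_of_ne hc0 with h0 | h0
  · exact ⟨c, d, s, t, hcd, hs, hs1, ht, ht1, hO, hX, h0, by nlinarith, h2'⟩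
  · refine ⟨d, c, s, 1 - t, T.symm hcd, hs, hs1, by linarith, by linarith, fun p q => ?_, ?_,
      by nlinarith, h0, ?_⟩
    · rw [hO]; ring
    · rw [hX]; ring
    · rw [T.O_swap c d a, T.O_swap c d b]; linarith

lemma O_pos_of_left {v a b c : α} (hb : T.X v < T.X b) (hc : T.X v < T.X c) (ha : T.X a < T.X v)
    (hba : 0 < T.O v b a) (hbc : 0 ≤ T.O v b c) : 0 < T.O v c a := by
  have key : T.O v c a * (T.X b - T.X v) =
      T.O v b a * (T.X c - T.X v) + T.O v b c * (T.X v - T.X a) := by simp only [O]; ring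
  have h1 : 0 < T.O v b a * (T.X c - T.X v) := mul_pos hba (by linarith)
  have h2 : 0 ≤ T.O v b c * (T.X v - T.X a) := mul_nonneg hbc (by linarith)
  exact pos_of_mul_pos_left (by linarith) (sub_pos.2 hb).le

lemma O_pos_trans {v b w c : α} (hb : T.X v < T.X b) (hw : T.X v < T.X w) (hc : T.X v < T.X c)
    (hbw : 0 ≤ T.O v b w) (hwc : 0 < T.O v w c) : 0 < T.O v b c := by
  have key : T.O v b c * (T.X w - T.X v) =
      T.O v b w * (T.X c - T.X v) + T.O v w c * (T.X b - T.X v) := by simp only [O]; ring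
  have h1 : 0 ≤ T.O v b w * (T.X c - T.X v) := mul_nonneg hbw (by linarith)
  have h2 : 0 < T.O v w c * (T.X b - T.X v) := mul_pos hwc (by linarith)
  exact pos_of_mul_pos_left (by linarith) (sub_pos.2 hw).le

lemma mul_neg_of_combos {p q p' q' x y r r' : ℝ} (hp : 0 ≤ p) (hq : 0 ≤ q) (hp' : 0 ≤ p')
    (hq' : 0 ≤ q') (h : p * x + q * y = r) (h' : p' * x + q' * y = r') (hr : r * r' < 0) :
    x * y < 0 := by
  rcases mul_neg_iff.1 hr with ⟨h1, h2⟩ | ⟨h1, h2⟩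
  · by_contra! hxy
    rcases mul_nonneg_iff.1 hxy with ⟨hx, hy⟩ | ⟨hx, hy⟩
    · nlinarith [mul_nonneg hp' hx, mul_nonneg hq' hy]
    · nlinarith [mul_nonneg hp (neg_nonneg.2 hx), mul_nonneg hq (neg_nonneg.2 hy)]
  · by_contra! hxy
    rcases mul_nonneg_iff.1 hxy with ⟨hx, hy⟩ | ⟨hx, hy⟩
    · nlinarith [mul_nonneg hp hx, mul_nonneg hq hy]
    · nlinarith [mul_nonneg hp' (neg_nonneg.2 hx), mul_nonneg hq' (neg_nonneg.2 hy)]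

lemma mul_neg_of_combos_of_nonpos {p q p' q' x y : ℝ} (hp : 0 < p) (hq : 0 < q) (hp' : 0 ≤ p')
    (hq' : 0 ≤ q') (h : p * x + q * y ≤ 0) (h' : 0 < p' * x + q' * y) : x * y < 0 := by
  by_contra! hxy
  rcases mul_nonneg_iff.1 hxy with ⟨hx, hy⟩ | ⟨hx, hy⟩
  · have hx0 : x = 0 := by
      by_contra hne
      linarith [mul_pos hp (lt_of_le_of_ne hx (Ne.symm hne)), mul_nonneg hq.le hy]
    have hy0 : y = 0 := by
      by_contra hne
      linarith [mul_pos hq (lt_of_le_of_ne hy (Ne.symm hne)), mul_nonneg hp.le hx]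
    simp [hx0, hy0] at h'
  · linarith [mul_nonneg hp' (neg_nonneg.2 hx), mul_nonneg hq' (neg_nonneg.2 hy)]

/-- `a b` is a lowest edge above `v`. -/
structure LowestAbove (v a b : α) : Prop where
  adj : T.A a b
  left : T.X a < T.X v
  right : T.X v < T.X b
  above : T.O a b v < 0
  lowest : ∀ c d, T.A c d → T.X c < T.X v → T.X v < T.X d → T.O c d v < 0 →
    (T.X b - T.X a) * T.O c d v ≤ (T.X d - T.X c) * T.O a b v

/-- `w` is, among the vertices to the right of `v` in the triangle `a v b`, one of largest slope
as seen from `v`. -/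
structure SteepestRight (v a b w : α) : Prop where
  mem : w ∈ T.V
  right : T.X v < T.X w
  below : T.O a b w ≤ 0
  inside : 0 ≤ T.O v b w
  steepest : ∀ u ∈ T.V, T.X v < T.X u → T.O a b u ≤ 0 → 0 ≤ T.O v b u → T.O v w u ≤ 0

variable {T}

lemma LowestAbove.reflX {v a b : α} (h : T.LowestAbove v a b) : T.reflX.LowestAbove v b a where
  adj := T.symm h.adj
  left := neg_lt_neg h.right
  right := neg_lt_neg h.left
  above := by rw [reflX_O, O_swap]; linarith [h.above]
  lowest := fun c d hcd hc hd hv => by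
    have hc : T.X v < T.X c := neg_lt_neg_iff.1 hc
    have hd : T.X d < T.X v := neg_lt_neg_iff.1 hd
    rw [reflX_O, O_swap, neg_neg] at hv
    have := h.lowest d c (T.symm hcd) hd hc hv
    rw [reflX_O, O_swap, neg_neg, reflX_O, T.O_swap a b, neg_neg]
    simp only [GenericTriangulation.reflX]
    linarith

lemma SteepestRight.adj {v a b w : α} (hv : v ∈ T.V) (h : T.LowestAbove v a b)
    (hw : T.SteepestRight v a b w) : T.A v w := by
  by_contra hvw
  have hne : v ≠ w := by rintro rfl; exact lt_irrefl _ hw.right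
  obtain ⟨d, c, s, t, hdc, hs, hs1, ht, ht1, hO, hX, hd0, hc0, hL⟩ :=
    T.exists_cross hv hw.mem hne hvw
  have hc := T.mem (T.symm hdc)
  have hcv : c ≠ v := by rintro rfl; rw [O_self_left] at hc0; exact lt_irrefl _ hc0
  have hba : 0 < T.O v b a := by
    rw [T.O_swap_right, T.O_rotate v a b |>.symm]; linarith [h.above]
  have hwa : 0 < T.O v w a := T.O_pos_of_left h.right hw.right h.left hba hw.inside
  have hM := hO a b
  have hM0 : (1 - t) * T.O a b d + t * T.O a b c < 0 := by
    have h1 := mul_pos_of_neg_of_neg (show -(1 - s) < 0 by linarith) h.above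
    have h2 := mul_nonneg hs.le (neg_nonneg.2 hw.below)
    linarith
  have hbw := T.O_barycentric a b v d c w
  have e1 : T.O b v w = - T.O v b w := T.O_swap _ _ _
  have e2 : T.O v a w = - T.O v w a := T.O_swap_right _ _ _
  rw [e1, e2] at hbw
  rcases lt_or_gt_of_ne (T.injX hc hv hcv) with hcx | hcx
  · have hdx : T.X v < T.X d := by
      have h1 := mul_pos hs (sub_pos.2 hw.right)
      have h2 := mul_pos ht (sub_pos.2 hcx)
      by_contra! hle
      have h3 := mul_nonneg (sub_nonneg.2 ht1.le) (sub_nonneg.2 hle)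
      linarith
    have hcdv : T.O c d v < 0 := by
      have h1 := hO v c
      rw [O_self_left, O_self_right, T.O_swap_right v w c] at h1
      have h2 := mul_pos hs hc0
      rw [T.O_rotate v c d]
      by_contra! hle
      linarith [mul_nonneg (sub_nonneg.2 ht1.le) hle]
    have hlow := h.lowest c d (T.symm hdc) hcx hdx hcdv
    have hkey : (T.X d - T.X v) * T.O a b c + (T.X v - T.X c) * T.O a b d =
        (T.X d - T.X c) * T.O a b v - (T.X b - T.X a) * T.O c d v := by simp only [O]; ring
    have hkey' : (T.X b - T.X v) * T.O d c a + (T.X v - T.X a) * T.O d c b =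
        (T.X d - T.X c) * T.O a b v - (T.X b - T.X a) * T.O c d v := by simp only [O]; ring
    have hMd : T.O a b d < 0 := by
      by_contra! hle
      have h1 : 0 < (1 - t) * (T.X d - T.X v) - t * (T.X v - T.X c) := by
        linarith [mul_pos hs (sub_pos.2 hw.right)]
      have h2 := mul_pos_of_neg_of_neg hM0 (show -(T.X d - T.X v) < 0 by linarith)
      have h3 := mul_nonneg h1.le hle
      have h4 : 0 ≤ t * ((T.X d - T.X v) * T.O a b c + (T.X v - T.X c) * T.O a b d) :=
        mul_nonneg ht.le (by linarith)
      linarith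
    have hMc : 0 < T.O a b c := by
      have h1 := mul_pos_of_neg_of_neg hMd (show -(T.X v - T.X c) < 0 by linarith)
      exact pos_of_mul_pos_right (a := T.X d - T.X v) (by linarith) (by linarith)
    refine T.noCross (T.symm hdc) h.adj ?_ (mul_neg_of_pos_of_neg hMc hMd)
    have hbw' := T.O_barycentric a b v c d w
    rw [e1, e2] at hbw'
    have hcdw : 0 < T.O c d w := by
      rw [T.O_swap c d v, T.O_swap c d w] at hL
      by_contra! hle
      linarith [mul_nonneg_of_nonpos_of_nonpos hcdv.le hle]
    refine mul_neg_of_combos_of_nonpos (sub_pos.2 h.right) (sub_pos.2 h.left) hw.inside hwa.le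
      (x := T.O c d a) (y := T.O c d b) ?_ ?_
    · rw [T.O_swap c d a, T.O_swap c d b] at hkey'
      linarith
    · have h1 := mul_nonneg_of_nonpos_of_nonpos hw.below hcdv.le
      have h2 := mul_neg_of_neg_of_pos h.above hcdw
      linarith
  · have hbc := T.O_pos_trans h.right hw.right hcx hw.inside hc0
    have hMc : 0 < T.O a b c := by
      by_contra! hle
      linarith [hw.steepest c hc hcx hle hbc.le]
    have hMd : T.O a b d < 0 := by
      have := mul_pos ht hMc
      by_contra! hle
      nlinarith [mul_nonneg (sub_nonneg.2 ht1.le) hle]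
    have hca := T.O_pos_of_left h.right hcx h.left hba hbc.le
    have hbcc := T.O_barycentric a b v d c c
    rw [T.O_swap v b c, T.O_swap_right v c a, T.O_self_right] at hbcc
    refine T.noCross hdc h.adj ?_ (mul_neg_of_neg_of_pos hMd hMc)
    refine mul_neg_of_combos hbc.le hca.le hw.inside hwa.le
      (r := T.O a b c * T.O d c v) (r' := T.O a b w * T.O d c v - T.O a b v * T.O d c w)
      (x := T.O d c a) (y := T.O d c b) (by linarith) (by linarith) ?_
    have h1 : T.O a b w * (T.O d c v) ^ 2 ≤ 0 :=
      mul_nonpos_of_nonpos_of_nonneg hw.below (sq_nonneg _)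
    have h2 := mul_pos_of_neg_of_neg h.above hL
    nlinarith [mul_pos hMc h2, mul_nonneg hMc.le (neg_nonneg.2 h1)]

lemma LowestAbove.exists_steepestRight {v a b : α} (h : T.LowestAbove v a b) :
    ∃ w, T.SteepestRight v a b w := by
  classical
  obtain ⟨w, hw, hmax⟩ := (T.V.filter fun u => T.X v < T.X u ∧ T.O a b u ≤ 0 ∧ 0 ≤ T.O v b u)
    |>.exists_max_image (fun u => (T.Y u - T.Y v) / (T.X u - T.X v))
      ⟨b, by simp [T.mem (T.symm h.adj), h.right, O_self_right]⟩
  simp only [Finset.mem_filter] at hw hmax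
  refine ⟨w, hw.1, hw.2.1, hw.2.2.1, hw.2.2.2, fun u hu h1 h2 h3 => ?_⟩
  have := hmax u ⟨hu, h1, h2, h3⟩
  rw [div_le_div_iff₀ (sub_pos.2 h1) (sub_pos.2 hw.2.1)] at this
  simp only [O]
  linarith

lemma exists_edge_above {v p q : α} (hv : v ∈ T.V) (hp : p ∈ T.V) (hq : q ∈ T.V)
    (hpv : T.X p < T.X v) (hvq : T.X v < T.X q) (hpq : T.O p q v < 0) :
    ∃ a b, T.A a b ∧ T.X a < T.X v ∧ T.X v < T.X b ∧ T.O a b v < 0 := by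
  classical
  obtain ⟨⟨a, b⟩, hab, hmin⟩ :=
    ((T.V ×ˢ T.V).filter fun e => T.X e.1 < T.X v ∧ T.X v < T.X e.2).exists_min_image
      (fun e => T.O e.1 e.2 v / (T.X e.2 - T.X e.1)) ⟨(p, q), by simp [hp, hq, hpv, hvq]⟩
  simp only [Finset.mem_filter, Finset.mem_product, Prod.forall] at hab hmin
  obtain ⟨⟨ha, hb⟩, hav, hvb⟩ := hab
  have hmin' : ∀ c d, c ∈ T.V → d ∈ T.V → T.X c < T.X v → T.X v < T.X d →
      T.O a b v * (T.X d - T.X c) ≤ T.O c d v * (T.X b - T.X a) := fun c d hc hd h1 h2 =>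
    (div_le_div_iff₀ (by linarith) (by linarith)).1 (hmin c d ⟨⟨hc, hd⟩, h1, h2⟩)
  have habv : T.O a b v < 0 := by
    have h1 := hmin' p q hp hq hpv hvq
    have h2 := mul_neg_of_neg_of_pos hpq (show 0 < T.X b - T.X a by linarith)
    exact neg_of_mul_neg_left (h1.trans_lt h2) (by linarith)
  have hup : ∀ u ∈ T.V, T.O a b u ≤ 0 := by
    intro u hu
    by_contra! hpos
    have huv : u ≠ v := by rintro rfl; linarith
    rcases lt_trichotomy (T.X u) (T.X v) with hx | hx | hx
    · have h1 := hmin' u b hu hb hx hvb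
      have h2 : T.O u b v * (T.X b - T.X a) - T.O a b v * (T.X b - T.X u) =
        -((T.X b - T.X v) * T.O a b u) := by simp only [O]; ring
      linarith [mul_pos (sub_pos.2 hvb) hpos]
    · exact T.injX hu hv huv hx
    · have h1 := hmin' a u ha hu hav hx
      have h2 : T.O a u v * (T.X b - T.X a) - T.O a b v * (T.X u - T.X a) =
        -((T.X v - T.X a) * T.O a b u) := by simp only [O]; ring
      linarith [mul_pos (sub_pos.2 hav) hpos]
  refine ⟨a, b, ?_, hav, hvb, habv⟩
  by_contra hadj
  obtain ⟨c, d, s, t, hcd, -, -, -, -, -, -, -, hd, -⟩ :=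
    T.exists_cross ha hb (by rintro rfl; linarith) hadj
  linarith [hup d (T.mem (T.symm hcd))]

lemma exists_lowestAbove {v p q : α} (hv : v ∈ T.V) (hp : p ∈ T.V) (hq : q ∈ T.V)
    (hpv : T.X p < T.X v) (hvq : T.X v < T.X q) (hpq : T.O p q v < 0) :
    ∃ a b, T.LowestAbove v a b := by
  classical
  obtain ⟨a₀, b₀, h₀, h₁, h₂, h₃⟩ := exists_edge_above hv hp hq hpv hvq hpq
  obtain ⟨⟨a, b⟩, hab, hmax⟩ := ((T.V ×ˢ T.V).filter fun e =>
      T.A e.1 e.2 ∧ T.X e.1 < T.X v ∧ T.X v < T.X e.2 ∧ T.O e.1 e.2 v < 0).exists_max_image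
      (fun e => T.O e.1 e.2 v / (T.X e.2 - T.X e.1))
      ⟨(a₀, b₀), by simp [T.mem h₀, T.mem (T.symm h₀), h₀, h₁, h₂, h₃]⟩
  simp only [Finset.mem_filter, Finset.mem_product, Prod.forall] at hab hmax
  obtain ⟨-, hab, hav, hvb, habv⟩ := hab
  refine ⟨a, b, hab, hav, hvb, habv, fun c d hcd hc hd hcdv => ?_⟩
  have := hmax c d ⟨⟨T.mem hcd, T.mem (T.symm hcd)⟩, hcd, hc, hd, hcdv⟩
  rw [div_le_div_iff₀ (by linarith) (by linarith)] at this
  linarith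

lemma SteepestRight.not_mem_triangle {v a b w w' u : α} (h : T.LowestAbove v a b)
    (hw : T.SteepestRight v a b w) (hw' : T.O a b w' ≤ 0) (hv : T.O w' w v < 0)
    (hu : u ∈ T.V) (hvu : T.X v < T.X u) (h1 : 0 < T.O v w u) (h2 : T.O v w' u < 0)
    (h3 : T.O w' w u < 0) : False := by
  have hb := T.O_barycentric w' w v a b u
  rw [T.O_swap v w u] at hb
  have e1 := mul_pos_of_neg_of_neg h3 h.above
  have e2 := mul_nonneg_of_nonpos_of_nonpos h2.le hw.below
  have e3 := mul_nonneg_of_nonpos_of_nonpos (neg_nonpos.2 h1.le) hw'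
  have e4 : T.O a b u < 0 := by
    by_contra! hle
    linarith [mul_nonpos_of_nonpos_of_nonneg hv.le hle]
  linarith [hw.steepest u hu hvu e4.le (T.O_pos_trans h.right hw.right hvu hw.inside h1).le]

/-- If an edge `c d` crosses the side `w' w` of a triangle `w' v w`, and its line separates `v`
from `w`, but the side `v w` is an edge, then its endpoint `c` lies inside the triangle. -/
lemma mem_triangle_of_cross {v w w' c d : α} {s t : ℝ} (hw : w ∈ T.V) (hvw : T.A v w)
    (hcd : T.A c d) (hs1 : s < 1) (ht : 0 < t) (ht1 : t < 1)
    (hO : ∀ p q, (1 - s) * T.O p q w' + s * T.O p q w = (1 - t) * T.O p q c + t * T.O p q d)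
    (hv : T.O w' w v < 0) (hc : T.O w' w c < 0) (hL : T.O c d w' * T.O c d w < 0)
    (hLv : T.O c d v * T.O c d w < 0) : 0 < T.O v w c ∧ T.O v w' c < 0 := by
  have hpos : 0 < T.O v w w' := by rw [T.O_swap_right, T.O_rotate v w' w |>.symm]; linarith
  have h1 := hO v w
  rw [O_self_right] at h1
  have h2 := mul_pos (sub_pos.2 hs1) hpos
  have hcv : c ≠ v := by rintro rfl; simp [O_self_left] at hLv
  have hcw : c ≠ w := by rintro rfl; simp [O_self_left] at hLv
  have h3 : 0 < T.O v w c := by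
    rcases lt_trichotomy (T.O v w c) 0 with h0 | h0 | h0
    · exfalso
      have h4 : 0 < T.O v w d := by
        have := mul_pos_of_neg_of_neg h0 (show -(1 - t) < 0 by linarith)
        exact pos_of_mul_pos_right (a := t) (by linarith) ht.le
      exact T.noCross hvw hcd (mul_neg_of_neg_of_pos h0 h4) hLv
    · rcases T.O_eq_zero (T.mem hvw) hw (T.mem hcd) (T.ne hvw) h0 with h | h
      · exact absurd h hcv
      · exact absurd h hcw
    · exact h0
  refine ⟨h3, ?_⟩
  have hb := T.O_barycentric w' w v c d c
  rw [O_self_left, T.O_swap v w c] at hb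
  by_contra! hle
  rcases mul_neg_iff.1 hLv with ⟨e1, e2⟩ | ⟨e1, e2⟩
  · have e3 : 0 < T.O c d w' := by
      by_contra! h0
      linarith [mul_nonneg_of_nonpos_of_nonpos h0 e2.le]
    linarith [mul_neg_of_neg_of_pos hc e1, mul_pos h3 e3, mul_nonpos_of_nonneg_of_nonpos hle e2.le]
  · have e3 : T.O c d w' < 0 := by
      by_contra! h0
      linarith [mul_nonneg h0 e2.le]
    linarith [mul_pos_of_neg_of_neg hc e1, mul_neg_of_pos_of_neg h3 e3, mul_nonneg hle e2.le]

/-- The face `a v b` lying directly above a vertex `v` that is below some chord `p q`. -/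
theorem exists_triangle_above {v p q : α} (hv : v ∈ T.V) (hp : p ∈ T.V) (hq : q ∈ T.V)
    (hpv : T.X p < T.X v) (hvq : T.X v < T.X q) (hpq : T.O p q v < 0) :
    ∃ a b, T.A a v ∧ T.A v b ∧ T.A a b ∧ T.X a < T.X v ∧ T.X v < T.X b ∧ T.O a b v < 0 ∧
      ∀ u ∈ T.V, 0 < T.O v b u → T.O v a u < 0 → T.O a b u < 0 → False := by
  obtain ⟨a, b, h⟩ := exists_lowestAbove hv hp hq hpv hvq hpq
  obtain ⟨w, hw⟩ := h.exists_steepestRight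
  obtain ⟨w', hw'⟩ := h.reflX.exists_steepestRight
  have hvw := hw.adj hv h
  have hvw' : T.A v w' := SteepestRight.adj (T := T.reflX) hv h.reflX hw'
  have hw'V : w' ∈ T.V := hw'.mem
  have hw'x : T.X w' < T.X v := neg_lt_neg_iff.1 hw'.right
  have hw'b : T.O a b w' ≤ 0 := by
    have := hw'.below
    rwa [reflX_O, O_swap, neg_neg] at this
  have hw'i : T.O v a w' ≤ 0 := by
    have := hw'.inside
    rwa [reflX_O, neg_nonneg] at this
  have hba : 0 < T.O v b a := by
    rw [T.O_swap_right, T.O_rotate v a b |>.symm]; linarith [h.above]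
  have hwa : 0 < T.O v w a := T.O_pos_of_left h.right hw.right h.left hba hw.inside
  have hww' : T.O v w' w < 0 := by
    have := T.reflX.O_pos_of_left (v := v) (a := w) (b := a) (c := w') (neg_lt_neg h.left)
      hw'.right (neg_lt_neg hw.right) (by rw [reflX_O, O_swap_right]; linarith) hw'.inside
    rwa [reflX_O, neg_pos] at this
  have hN : T.O w' w v < 0 := by rwa [T.O_rotate v w' w]
  have hempty : ∀ u ∈ T.V, 0 < T.O v w u → T.O v w' u < 0 → T.O w' w u < 0 → False := by
    intro u hu h1 h2 h3
    have huv : u ≠ v := by rintro rfl; simp [O_self_left] at h1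
    rcases lt_or_gt_of_ne (T.injX hu hv huv) with hx | hx
    · refine hw'.not_mem_triangle h.reflX (u := u) (w' := w) ?_ ?_ hu (neg_lt_neg hx) ?_ ?_ ?_ <;>
        rw [reflX_O]
      · rw [O_swap]; linarith [hw.below]
      · rw [O_swap]; linarith
      · linarith
      · linarith
      · rw [O_swap]; linarith
    · exact hw.not_mem_triangle h hw'b hN hu hx h1 h2 h3
  refine ⟨w', w, T.symm hvw', hvw, ?_, hw'x, hw.right, hN, hempty⟩
  by_contra hadj
  obtain ⟨c, d, s, t, hcd, hs, hs1, ht, ht1, hO, -, hc0, hd0, hL⟩ :=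
    T.exists_cross hw'V hw.mem (by rintro rfl; linarith [hw.right]) hadj
  have hc := T.mem hcd
  have hd := T.mem (T.symm hcd)
  by_cases hLv : T.O c d v = 0
  · rcases T.O_eq_zero hc hd hv (T.ne hcd) hLv with rfl | rfl
    · have h1 : 0 < T.O v w d := by
        have h1 := hO v w
        rw [O_self_right, O_self_left, T.O_swap_right v w' w] at h1
        have h2 := mul_pos_of_neg_of_neg hww' (show -(1 - s) < 0 by linarith)
        exact pos_of_mul_pos_right (a := t) (by linarith) ht.le
      have h2 : T.O v w' d < 0 := by
        have h1 := hO v w'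
        rw [O_self_right, O_self_left] at h1
        have h2 := mul_neg_of_pos_of_neg hs hww'
        exact neg_of_mul_neg_right (a := t) (by linarith) ht.le
      have hdv : d ≠ v := (T.ne hcd).symm
      have hside : 0 < T.O a b d ∧ T.O v d a * T.O v d b < 0 := by
        rcases lt_or_gt_of_ne (T.injX hd hv hdv) with hx | hx
        · have h3 : 0 < T.reflX.O v a d := T.reflX.O_pos_trans (w := w') (neg_lt_neg h.left)
            hw'.right (neg_lt_neg hx) hw'.inside (by rw [reflX_O]; linarith)
          have h4 : 0 < T.reflX.O v d b := T.reflX.O_pos_of_left (b := a) (neg_lt_neg h.left)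
            (neg_lt_neg hx) (neg_lt_neg h.right) (by rw [reflX_O, O_swap_right]; linarith) h3.le
          have h5 : 0 < T.O a b d := by
            by_contra! hle
            have := hw'.steepest d hd (neg_lt_neg hx) (by rw [reflX_O, O_swap]; linarith) h3.le
            rw [reflX_O] at this
            linarith
          rw [reflX_O] at h3 h4
          rw [T.O_swap_right v d a] at h3
          exact ⟨h5, mul_neg_of_pos_of_neg (by linarith) (by linarith)⟩
        · have h3 := T.O_pos_trans h.right hw.right hx hw.inside h1
          have h4 := T.O_pos_of_left h.right hx h.left hba h3.le
          have h5 : 0 < T.O a b d := by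
            by_contra! hle
            linarith [hw.steepest d hd hx hle h3.le]
          rw [T.O_swap_right v d b] at h3
          exact ⟨h5, mul_neg_of_pos_of_neg h4 (by linarith)⟩
      exact T.noCross h.adj hcd (mul_neg_of_neg_of_pos h.above hside.1) hside.2
    · linarith
  · rcases lt_or_gt_of_ne (mul_ne_zero hLv (right_ne_zero_of_mul hL.ne)) with hs' | hs'
    · obtain ⟨h1, h2⟩ := mem_triangle_of_cross hw.mem hvw hcd hs1 ht ht1 hO hN hc0 hL hs'
      exact hempty c hc h1 h2 hc0
    · have hs'' : T.O c d v * T.O c d w' < 0 := by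
        by_contra! h0
        have h1 := mul_pos hs' (neg_pos.2 hL)
        have h2 : 0 ≤ (T.O c d v * T.O c d w') * (T.O c d w) ^ 2 := mul_nonneg h0 (sq_nonneg _)
        linarith
      obtain ⟨h1, h2⟩ := mem_triangle_of_cross (T := T.reflX) (v := v) (w := w') (w' := w) (c := c)
        (d := d) (s := 1 - s) (t := t) hw'V hvw' hcd (by linarith) ht ht1
        (fun p q => by simp only [reflX_O]; linarith [hO p q])
        (by rw [reflX_O, O_swap]; linarith) (by rw [reflX_O, O_swap]; linarith)
        (by simp only [reflX_O]; linarith) (by simp only [reflX_O]; linarith)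
      rw [reflX_O] at h1 h2
      exact hempty c hc (by linarith) (by linarith) hc0

variable (T) in
/-- `a v b` is an empty triangle of the triangulation with middle vertex `v`. -/
structure Face (v a b : α) : Prop where
  adj_left : T.A a v
  adj_right : T.A v b
  adj : T.A a b
  left : T.X a < T.X v
  right : T.X v < T.X b
  ne_zero : T.O a b v ≠ 0
  empty_below : T.O a b v < 0 →
    ∀ u ∈ T.V, 0 < T.O v b u → T.O v a u < 0 → T.O a b u < 0 → False
  empty_above : 0 < T.O a b v →
    ∀ u ∈ T.V, T.O v b u < 0 → 0 < T.O v a u → 0 < T.O a b u → False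

theorem exists_face {v p q : α} (hv : v ∈ T.V) (hp : p ∈ T.V) (hq : q ∈ T.V)
    (hpv : T.X p < T.X v) (hvq : T.X v < T.X q) : ∃ a b, T.Face v a b := by
  have hpq : T.O p q v ≠ 0 := by
    intro h0
    rcases T.O_eq_zero hp hq hv (by rintro rfl; linarith) h0 with rfl | rfl <;>
      exact lt_irrefl _ (by assumption)
  rcases lt_or_gt_of_ne hpq with h | h
  · obtain ⟨a, b, h1, h2, h3, h4, h5, h6, h7⟩ := exists_triangle_above hv hp hq hpv hvq h
    exact ⟨a, b, h1, h2, h3, h4, h5, h6.ne, fun _ => h7, fun h => absurd h h6.not_gt⟩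
  · obtain ⟨a, b, h1, h2, h3, h4, h5, h6, h7⟩ := exists_triangle_above (T := T.reflY) hv hp hq
      hpv hvq (by rw [reflY_O]; linarith)
    simp only [reflY_O, neg_pos, neg_neg_iff_pos] at h6 h7
    exact ⟨a, b, h1, h2, h3, h4, h5, h6.ne', fun h => absurd h h6.not_gt, fun _ => h7⟩

lemma Face.eq_of_below {v v' a b : α} (h : T.Face v a b) (h' : T.Face v' a b)
    (hv : T.O a b v < 0) (hv' : T.O a b v' < 0) : v = v' := by
  by_contra hne
  have hvV := T.mem h.adj_right
  have hvV' := T.mem h'.adj_right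
  have ha := T.mem h.adj
  have hb := T.mem (T.symm h.adj)
  have h1 : T.O v a v' ≠ 0 := fun h0 => by
    rcases T.O_eq_zero hvV ha hvV' (T.ne h.adj_left).symm h0 with e | e
    · exact hne e.symm
    · exact T.ne h'.adj_left e.symm
  have h2 : T.O v b v' ≠ 0 := fun h0 => by
    rcases T.O_eq_zero hvV hb hvV' (T.ne h.adj_right) h0 with e | e
    · exact hne e.symm
    · exact T.ne h'.adj_right e
  have e1 : T.O v' a v = - T.O v a v' := by simp only [O]; ring
  have e2 : T.O v' b v = - T.O v b v' := by simp only [O]; ring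
  have e3 : T.O v a b = T.O a b v := (T.O_rotate v a b).symm
  have e4 : T.O v' a b = T.O a b v' := (T.O_rotate v' a b).symm
  have e5 : T.O v b a = - T.O a b v := by simp only [O]; ring
  have e6 : T.O v' b a = - T.O a b v' := by simp only [O]; ring
  rcases lt_or_gt_of_ne h1 with s1 | s1 <;> rcases lt_or_gt_of_ne h2 with s2 | s2
  · refine T.noCross (T.symm h'.adj_left) h.adj_right (a := v') (b := a) (c := v) (d := b) ?_ ?_
    · exact mul_neg_of_pos_of_neg (a := T.O v' a v) (b := T.O v' a b) (by linarith) (by linarith)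
    · exact mul_neg_of_neg_of_pos (a := T.O v b v') (b := T.O v b a) (by linarith) (by linarith)
  · exact h.empty_below hv v' hvV' s2 s1 hv'
  · exact h'.empty_below hv' v hvV (by linarith) (by linarith) hv
  · refine T.noCross (T.symm h.adj_left) h'.adj_right (a := v) (b := a) (c := v') (d := b) ?_ ?_
    · exact mul_neg_of_pos_of_neg (a := T.O v a v') (b := T.O v a b) (by linarith) (by linarith)
    · exact mul_neg_of_neg_of_pos (a := T.O v' b v) (b := T.O v' b a) (by linarith) (by linarith)

lemma Face.false_of_above_below {v v' a b : α} (h : T.Face v a b) (h' : T.Face v' v b)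
    (hv : 0 < T.O a b v) (hv' : T.O v b v' < 0) : False := by
  have hvV' := T.mem h'.adj_right
  have ha := T.mem h.adj
  have hb := T.mem (T.symm h.adj)
  have hleft := h.left
  have hvv' := h'.left
  have hvb' := h'.right
  have h1 : T.O a b v' ≠ 0 := fun h0 => by
    rcases T.O_eq_zero ha hb hvV' (T.ne h.adj) h0 with rfl | rfl <;> linarith
  rcases lt_or_gt_of_ne h1 with s1 | s1
  · refine T.noCross h.adj h'.adj_left (mul_neg_of_pos_of_neg (a := T.O a b v) hv s1) ?_
    have e1 : T.O v v' b = - T.O v b v' := T.O_swap_right _ _ _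
    refine mul_neg_of_neg_of_pos (a := T.O v v' a) (b := T.O v v' b) ?_ (by linarith)
    have key : T.O a b v * (T.X v' - T.X v) =
      -((T.X b - T.X v) * T.O v v' a + (T.X v - T.X a) * T.O v v' b) := by simp only [O]; ring
    have h2 := mul_pos hv (sub_pos.2 hvv')
    have h3 := mul_pos (sub_pos.2 hleft) (show 0 < T.O v v' b by linarith)
    exact neg_of_mul_neg_right (a := T.X b - T.X v) (by linarith) (by linarith)
  · refine h.empty_above hv v' hvV' hv' ?_ s1
    have key : T.O v a v' * (T.X b - T.X v) =
      (T.X v' - T.X v) * T.O a b v - (T.X v - T.X a) * T.O v b v' := by simp only [O]; ring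
    have h2 := mul_pos (sub_pos.2 hvv') hv
    have h3 := mul_neg_of_pos_of_neg (sub_pos.2 hleft) hv'
    exact pos_of_mul_pos_left (by linarith) (by linarith : 0 ≤ T.X b - T.X v)

variable (T) in
/-- The left endpoint of the upper one of the two sides of the face `a v b` at `b`. -/
noncomputable def upper (v a b : α) : α := if T.O a b v < 0 then a else v

lemma Face.eq_of_upper_eq {v v' a a' b : α} (h : T.Face v a b) (h' : T.Face v' a' b)
    (heq : T.upper v a b = T.upper v' a' b) : v = v' := by
  have h1 := h.ne_zero
  have h2 := h'.ne_zero
  unfold upper at heq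
  split_ifs at heq with s1 s2 s2
  · subst heq
    exact h.eq_of_below h' s1 s2
  · subst heq
    exact (h'.false_of_above_below h (lt_of_le_of_ne (not_lt.1 s2) h2.symm) s1).elim
  · subst heq
    exact (h.false_of_above_below h' (lt_of_le_of_ne (not_lt.1 s1) h1.symm) s2).elim
  · exact heq

/-- `c` is the lowest neighbour of `b` to the left of `b`. -/
lemma exists_lowest_left {b c₀ : α} (h₀ : T.A c₀ b) (hx₀ : T.X c₀ < T.X b) :
    ∃ c, T.A c b ∧ T.X c < T.X b ∧ ∀ u, T.A u b → T.X u < T.X b → 0 ≤ T.O c b u := by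
  classical
  obtain ⟨c, hc, hmax⟩ := (T.V.filter fun u => T.A u b ∧ T.X u < T.X b)
    |>.exists_max_image (fun u => (T.Y b - T.Y u) / (T.X b - T.X u))
      ⟨c₀, by simp [T.mem h₀, h₀, hx₀]⟩
  simp only [Finset.mem_filter] at hc hmax
  refine ⟨c, hc.2.1, hc.2.2, fun u hu hx => ?_⟩
  have := hmax u ⟨T.mem hu, hu, hx⟩
  rw [div_le_div_iff₀ (sub_pos.2 hx) (sub_pos.2 hc.2.2)] at this
  simp only [O]
  linarith

lemma Face.upper_adj {v a b : α} (h : T.Face v a b) :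
    T.A (T.upper v a b) b ∧ T.X (T.upper v a b) < T.X b := by
  have := h.left
  have := h.right
  unfold upper
  split_ifs
  · exact ⟨h.adj, by linarith⟩
  · exact ⟨h.adj_right, by linarith⟩

lemma Face.upper_ne_lowest {v a b c : α} (h : T.Face v a b)
    (hc : ∀ u, T.A u b → T.X u < T.X b → 0 ≤ T.O c b u) : T.upper v a b ≠ c := by
  have h1 := h.left
  have h2 := h.right
  have h3 := h.ne_zero
  unfold upper
  split_ifs with hs
  · rintro rfl
    linarith [hc v h.adj_right h.right]
  · rintro rfl
    have h4 := hc a h.adj (by linarith)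
    have e : T.O v b a = - T.O a b v := by simp only [O]; ring
    exact h3 (by linarith)

/-- A triangulation on `n ≥ 3` vertices has at least `2n - 3` edges, and each of its vertices
except for the leftmost and rightmost is the middle vertex of some face. -/
theorem exists_edges_and_faces (hn : 3 ≤ T.V.card) :
    ∃ (W : Finset α) (E : Finset (α × α)), T.V.card - 2 ≤ W.card ∧ 2 * T.V.card - 3 ≤ E.card ∧
      (∀ v ∈ W, ∃ a b, T.Face v a b) ∧ ∀ e ∈ E, T.A e.1 e.2 ∧ T.X e.1 < T.X e.2 := by
  classical
  have hne : T.V.Nonempty := Finset.card_pos.1 (by omega)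
  obtain ⟨p, hp, hpmin⟩ := T.V.exists_min_image T.X hne
  obtain ⟨q, hq, hqmax⟩ := T.V.exists_max_image T.X hne
  have hW1 : (T.V.erase p).card = T.V.card - 1 := Finset.card_erase_of_mem hp
  set W := (T.V.erase p).erase q with hWdef
  have hW2 : T.V.card - 2 ≤ W.card := by
    have := Finset.pred_card_le_card_erase (s := T.V.erase p) (a := q)
    rw [hWdef]
    omega
  have hpx : ∀ v ∈ T.V, v ≠ p → T.X p < T.X v := fun v hv h =>
    lt_of_le_of_ne (hpmin v hv) (T.injX hp hv h.symm)
  have hqx : ∀ v ∈ T.V, v ≠ q → T.X v < T.X q := fun v hv h =>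
    lt_of_le_of_ne (hqmax v hv) (T.injX hv hq h)
  have hface : ∀ v ∈ W, ∃ a b, T.Face v a b := by
    intro v hv
    simp only [W, Finset.mem_erase] at hv
    exact exists_face hv.2.2 hp hq (hpx v hv.2.2 hv.2.1) (hqx v hv.2.2 hv.1)
  have hleft : ∀ b, b ∈ T.V.erase p → ∃ c, T.A c b ∧ T.X c < T.X b ∧
      ∀ u, T.A u b → T.X u < T.X b → 0 ≤ T.O c b u := by
    intro b hb
    by_cases hbq : b = q
    · subst hbq
      obtain ⟨v, hv, hvmax⟩ := W.exists_max_image T.X (Finset.card_pos.1 (by omega))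
      obtain ⟨a, c, h⟩ := hface v hv
      have hc := T.mem (T.symm h.adj_right)
      have hcb : c = b := by
        by_contra hcb
        refine (hvmax c (Finset.mem_erase.2 ⟨hcb, Finset.mem_erase.2 ⟨?_, hc⟩⟩)).not_gt h.right
        rintro rfl
        exact (hpmin v (Finset.mem_of_mem_erase (Finset.mem_of_mem_erase hv))).not_gt h.right
      subst hcb
      exact exists_lowest_left h.adj_right h.right
    · obtain ⟨a, c, h⟩ := hface b (Finset.mem_erase.2 ⟨hbq, hb⟩)
      exact exists_lowest_left h.adj_left h.left
  choose! l hlA hlX hl using hleft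
  choose! a b hab using hface
  refine ⟨W, (T.V.erase p).image (fun v => (l v, v)) ∪
    W.image (fun v => (T.upper v (a v) (b v), b v)), hW2, ?_, fun v hv => ⟨_, _, hab v hv⟩, ?_⟩
  · rw [Finset.card_union_of_disjoint, Finset.card_image_of_injOn, Finset.card_image_of_injOn]
    · omega
    · intro v hv v' hv' heq
      simp only [Prod.mk.injEq] at heq
      have h' := hab v' hv'
      rw [← heq.2] at h' heq
      exact (hab v hv).eq_of_upper_eq h' heq.1
    · intro v _ v' _ heq
      exact (Prod.mk.inj heq).2
    · rw [Finset.disjoint_left]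
      intro e he he'
      obtain ⟨v, hv, rfl⟩ := Finset.mem_image.1 he
      obtain ⟨v', hv', heq⟩ := Finset.mem_image.1 he'
      obtain ⟨h1, h2⟩ := Prod.mk.inj heq
      have h3 := hab v' hv'
      rw [h2] at h1 h3
      exact h3.upper_ne_lowest (hl v hv) h1
  · intro e he
    rcases Finset.mem_union.1 he with he | he
    · obtain ⟨v, hv, rfl⟩ := Finset.mem_image.1 he
      exact ⟨hlA v hv, hlX v hv⟩
    · obtain ⟨v, hv, rfl⟩ := Finset.mem_image.1 he
      exact (hab v hv).upper_adj

end GenericTriangulation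

lemma exists_shear_injOn (V : Finset Pt) :
    ∃ ε : ℝ, ∀ p ∈ V, ∀ q ∈ V, p ≠ q → p.1 + ε * p.2 ≠ q.1 + ε * q.2 := by
  classical
  obtain ⟨ε, hε⟩ := Infinite.exists_notMem_finset
    ((V ×ˢ V).image fun e => -(e.1.1 - e.2.1) / (e.1.2 - e.2.2))
  refine ⟨ε, fun p hp q hq hpq h => ?_⟩
  by_cases h2 : p.2 = q.2
  · rw [h2] at h
    exact hpq (Prod.ext (by linarith) h2)
  · refine hε (Finset.mem_image.2 ⟨(p, q), Finset.mk_mem_product hp hq, ?_⟩)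
    rw [div_eq_iff (sub_ne_zero.2 h2)]
    linarith

lemma collinear_of_crossp_eq_zero {a b c : Pt} (hab : a ≠ b) (h : crossp (b - a) (c - a) = 0) :
    Collinear ℝ ({a, b, c} : Set Pt) := by
  simp only [crossp, Prod.fst_sub, Prod.snd_sub] at h
  rw [collinear_iff_of_mem (p₀ := a) (by simp)]
  refine ⟨b - a, ?_⟩
  simp only [Set.mem_insert_iff, Set.mem_singleton_iff, forall_eq_or_imp, forall_eq]
  refine ⟨⟨0, by simp⟩, ⟨1, by simp⟩, ?_⟩
  by_cases h1 : b.1 - a.1 = 0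
  · have h2 : b.2 - a.2 ≠ 0 := fun h2 => hab (Prod.ext (by linarith) (by linarith))
    refine ⟨(c.2 - a.2) / (b.2 - a.2), Prod.ext ?_ ?_⟩ <;>
      simp only [vadd_eq_add, Prod.fst_add, Prod.snd_add, Prod.smul_fst, Prod.smul_snd,
        Prod.fst_sub, Prod.snd_sub, smul_eq_mul] <;> field_simp <;> linarith
  · refine ⟨(c.1 - a.1) / (b.1 - a.1), Prod.ext ?_ ?_⟩ <;>
      simp only [vadd_eq_add, Prod.fst_add, Prod.snd_add, Prod.smul_fst, Prod.smul_snd,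
        Prod.fst_sub, Prod.snd_sub, smul_eq_mul] <;> field_simp <;> linarith

lemma mem_openSegment_iff_coords {a b z : Pt} : z ∈ openSegment ℝ a b ↔
    ∃ t : ℝ, 0 < t ∧ t < 1 ∧ (1 - t) * a.1 + t * b.1 = z.1 ∧ (1 - t) * a.2 + t * b.2 = z.2 := by
  constructor
  · rintro ⟨r, t, hr, ht, hrt, rfl⟩
    obtain rfl : r = 1 - t := by linarith
    exact ⟨t, ht, by linarith, by simp, by simp⟩
  · rintro ⟨t, ht, ht1, h1, h2⟩
    exact ⟨1 - t, t, by linarith, ht, by ring, Prod.ext (by simpa using h1) (by simpa using h2)⟩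

lemma div_sub_mem_Ioo {x y : ℝ} (h : x * y < 0) : 0 < x / (x - y) ∧ x / (x - y) < 1 := by
  rcases mul_neg_iff.1 h with ⟨hx, hy⟩ | ⟨hx, hy⟩
  · exact ⟨div_pos hx (by linarith), (div_lt_one (by linarith)).2 (by linarith)⟩
  · exact ⟨div_pos_of_neg_of_neg hx (by linarith),
      (div_lt_one_of_neg (by linarith)).2 (by linarith)⟩

/-- Two segments whose endpoints are strictly separated by each other's lines cross. -/
lemma openSegment_inter_nonempty {a b c d : Pt}
    (h1 : crossp (b - a) (c - a) * crossp (b - a) (d - a) < 0)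
    (h2 : crossp (d - c) (a - c) * crossp (d - c) (b - c) < 0) :
    (openSegment ℝ a b ∩ openSegment ℝ c d).Nonempty := by
  obtain ⟨t0, t1⟩ := div_sub_mem_Ioo h1
  obtain ⟨s0, s1⟩ := div_sub_mem_Ioo h2
  have hK : crossp (b - a) (c - a) - crossp (b - a) (d - a) ≠ 0 := by
    intro h0
    rw [h0] at t0
    simp at t0
  have hK' : crossp (d - c) (a - c) - crossp (d - c) (b - c) ≠ 0 := by
    intro h0
    rw [h0] at s0
    simp at s0
  set s := crossp (d - c) (a - c) / (crossp (d - c) (a - c) - crossp (d - c) (b - c)) with hs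
  set t := crossp (b - a) (c - a) / (crossp (b - a) (c - a) - crossp (b - a) (d - a)) with ht
  rw [eq_div_iff hK'] at hs
  rw [eq_div_iff hK] at ht
  clear_value s t
  refine ⟨((1 - s) * a.1 + s * b.1, (1 - s) * a.2 + s * b.2),
    mem_openSegment_iff_coords.2 ⟨s, s0, s1, rfl, rfl⟩,
    mem_openSegment_iff_coords.2 ⟨t, t0, t1, ?_, ?_⟩⟩
  · refine mul_right_cancel₀ hK ?_
    simp only [crossp, Prod.fst_sub, Prod.snd_sub] at hs ht ⊢
    linear_combination (d.1 - c.1) * ht + (b.1 - a.1) * hs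
  · refine mul_right_cancel₀ hK ?_
    simp only [crossp, Prod.fst_sub, Prod.snd_sub] at hs ht ⊢
    linear_combination (d.2 - c.2) * ht + (b.2 - a.2) * hs

lemma PSLG.IsTriangulation.exists_inter {G : PSLG} (htri : G.IsTriangulation)
    (hgen : NoThreeCollinear G.V) {a b : Pt} (ha : a ∈ G.V) (hb : b ∈ G.V) (hab : a ≠ b)
    (hE : s(a, b) ∉ G.E) :
    ∃ c d, s(c, d) ∈ G.E ∧ (openSegment ℝ a b ∩ openSegment ℝ c d).Nonempty := by
  by_contra! hno
  have hvert : ∀ v ∈ G.V, v ∉ openSegment ℝ a b := by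
    intro v hv hvab
    obtain ⟨t, ht, ht1, h1, h2⟩ := mem_openSegment_iff_coords.1 hvab
    have hva : a ≠ v := by
      rintro rfl
      exact hab (left_mem_openSegment_iff.1 hvab)
    have hvb : b ≠ v := by
      rintro rfl
      exact hab (right_mem_openSegment_iff.1 hvab)
    refine hgen a ha b hb v hv hab hva hvb (collinear_of_crossp_eq_zero hab ?_)
    simp only [crossp, Prod.fst_sub, Prod.snd_sub]
    rw [← h1, ← h2]
    ring
  obtain ⟨g1, g2, g3⟩ := G.valid
  refine htri a ha b hb hab hE ⟨?_, ?_, ?_⟩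
  · intro x y hxy
    rcases Finset.mem_insert.1 hxy with h | h
    · rcases Sym2.eq_iff.1 h with ⟨rfl, rfl⟩ | ⟨rfl, rfl⟩
      · exact ⟨ha, hb, hab⟩
      · exact ⟨hb, ha, hab.symm⟩
    · exact g1 x y h
  · intro x y hxy v hv
    rcases Finset.mem_insert.1 hxy with h | h
    · rcases Sym2.eq_iff.1 h with ⟨rfl, rfl⟩ | ⟨rfl, rfl⟩
      · exact hvert v hv
      · rw [openSegment_symm]
        exact hvert v hv
    · exact g2 x y h v hv
  · intro x y z w hxy hzw hne
    rcases Finset.mem_insert.1 hxy with h | h <;> rcases Finset.mem_insert.1 hzw with h' | hzwE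
    · exact absurd (h.trans h'.symm) hne
    · rcases Sym2.eq_iff.1 h with ⟨rfl, rfl⟩ | ⟨rfl, rfl⟩
      · exact hno z w hzwE
      · rw [openSegment_symm ℝ x y]
        exact hno z w hzwE
    · rw [Set.inter_comm]
      rcases Sym2.eq_iff.1 h' with ⟨rfl, rfl⟩ | ⟨rfl, rfl⟩
      · exact hno x y h
      · rw [openSegment_symm ℝ z w]
        exact hno x y h
    · exact g3 x y z w h hzwE hne

/-- A triangulation in general position, in generically sheared coordinates. -/
theorem PSLG.IsTriangulation.exists_genericTriangulation {G : PSLG} (htri : G.IsTriangulation)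
    (hgen : NoThreeCollinear G.V) :
    ∃ T : GenericTriangulation Pt, T.V = G.V ∧ ∀ a b, T.A a b ↔ s(a, b) ∈ G.E := by
  obtain ⟨ε, hε⟩ := exists_shear_injOn G.V
  refine ⟨{
    V := G.V
    X := fun p => p.1 + ε * p.2
    Y := fun p => p.2
    A := fun a b => s(a, b) ∈ G.E
    symm := fun h => by rwa [Sym2.eq_swap]
    mem := fun h => (G.valid.1 _ _ h).1
    ne := fun h => (G.valid.1 _ _ h).2.2
    injX := fun ha hb hab => hε _ ha _ hb hab
    gen := ?_
    noCross := ?_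
    cross := ?_ }, rfl, fun _ _ => Iff.rfl⟩
  · intro a b c ha hb hc hab hac hbc h0
    refine hgen a ha b hb c hc hab hac hbc (collinear_of_crossp_eq_zero hab ?_)
    simp only [crossp, Prod.fst_sub, Prod.snd_sub]
    linear_combination h0
  · intro a b c d hab hcd h1 h2
    have key : ∀ p q r : Pt, (q.1 + ε * q.2 - (p.1 + ε * p.2)) * (r.2 - p.2) -
        (q.2 - p.2) * (r.1 + ε * r.2 - (p.1 + ε * p.2)) = crossp (q - p) (r - p) := by
      intro p q r
      simp only [crossp, Prod.fst_sub, Prod.snd_sub]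
      ring
    simp only [key] at h1 h2
    refine (openSegment_inter_nonempty h1 h2).ne_empty (G.valid.2.2 a b c d hab hcd fun he => ?_)
    rcases Sym2.eq_iff.1 he with ⟨rfl, rfl⟩ | ⟨rfl, rfl⟩ <;> simp [crossp] at h1
  · intro a b ha hb hab hE
    obtain ⟨c, d, hcd, z, hz, hz'⟩ := htri.exists_inter hgen ha hb hab hE
    obtain ⟨s, s0, s1, e1, e2⟩ := mem_openSegment_iff_coords.1 hz
    obtain ⟨t, t0, t1, f1, f2⟩ := mem_openSegment_iff_coords.1 hz'
    refine ⟨c, d, s, t, hcd, s0, s1, t0, t1, ?_, by rw [e2, f2]⟩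
    linear_combination e1 - f1 + ε * (e2 - f2)

lemma finite_setOf_isDirPath (D : Finset (Pt × Pt)) : {L : List Pt | IsDirPath D L}.Finite := by
  classical
  set V := D.image Prod.fst ∪ D.image Prod.snd
  refine ((Set.finite_univ (α := {l : List V // l.Nodup})).image
    (fun l => l.1.map Subtype.val)).subset ?_
  rintro L ⟨hlen, hnd, hch⟩
  have hmem : ∀ x ∈ L, x ∈ V := by
    intro x hx
    obtain ⟨i, hi, rfl⟩ := List.getElem_of_mem hx
    have hch' := List.isChain_iff_getElem.1 hch
    by_cases hi' : i + 1 < L.length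
    · exact Finset.mem_union_left _ (Finset.mem_image.2 ⟨_, hch' i hi', rfl⟩)
    · obtain ⟨j, rfl⟩ : ∃ j, i = j + 1 := ⟨i - 1, by omega⟩
      exact Finset.mem_union_right _ (Finset.mem_image.2 ⟨_, hch' j hi, rfl⟩)
  have hval : (L.attachWith _ hmem).map Subtype.val = L := List.attachWith_map_subtype_val hmem
  exact ⟨⟨_, List.Nodup.of_map Subtype.val (hval.symm ▸ hnd)⟩, Set.mem_univ _, hval⟩

/-- Every oriented triangle contains a directed path through its three vertices. -/
lemma exists_isDirPath_of_triangle {D : Finset (Pt × Pt)} {x y z : Pt} (hxy : x ≠ y) (hxz : x ≠ z)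
    (hyz : y ≠ z) (h1 : (x, y) ∈ D ∨ (y, x) ∈ D) (h2 : (y, z) ∈ D ∨ (z, y) ∈ D)
    (h3 : (x, z) ∈ D ∨ (z, x) ∈ D) : ∃ L, IsDirPath D L ∧ L.Perm [x, y, z] := by
  suffices ∃ L : List Pt, L.Perm [x, y, z] ∧ L.IsChain (fun a b => (a, b) ∈ D) by
    obtain ⟨L, hL, hch⟩ := this
    exact ⟨L, ⟨by simp [hL.length_eq], hL.nodup_iff.2 (by simp [hxy, hxz, hyz]), hch⟩, hL⟩
  rcases h1 with h1 | h1 <;> rcases h2 with h2 | h2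
  · exact ⟨[x, y, z], List.Perm.refl _, by simp [h1, h2]⟩
  · rcases h3 with h3 | h3
    · exact ⟨[x, z, y], by grind, by simp [h3, h2]⟩
    · exact ⟨[z, x, y], by grind, by simp [h3, h1]⟩
  · rcases h3 with h3 | h3
    · exact ⟨[y, x, z], by grind, by simp [h1, h3]⟩
    · exact ⟨[y, z, x], by grind, by simp [h2, h3]⟩
  · exact ⟨[z, y, x], by grind, by simp [h2, h1]⟩

/-- every orientation of a triangulation of `n ≥ 3` points (no three
collinear) contains at least `3n − 5` directed simple paths. -/
theorem directed_triangulation_lower_bound (G : PSLG)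
    (hcard : 3 ≤ G.V.card) (hgen : NoThreeCollinear G.V)
    (htri : G.IsTriangulation)
    (D : Finset (Pt × Pt)) (hD : IsOrientation G D) :
    3 * G.V.card - 5 ≤ dirPathCount D := by
  classical
  obtain ⟨T, hV, hA⟩ := htri.exists_genericTriangulation hgen
  obtain ⟨W, E, hW, hE, hface, hedge⟩ := T.exists_edges_and_faces (by rwa [hV])
  rw [hV] at hW hE
  have hor : ∀ {a b}, T.A a b → (a, b) ∈ D ∨ (b, a) ∈ D := fun {a b} h =>
    (hD.2 a b ((hA a b).1 h)).imp And.left And.left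
  choose! a b hab using hface
  have hpath : ∀ v ∈ W, ∃ L, IsDirPath D L ∧ L.Perm [a v, v, b v] := fun v hv =>
    have h := hab v hv
    exists_isDirPath_of_triangle (T.ne h.adj_left) (T.ne h.adj) (T.ne h.adj_right)
      (hor h.adj_left) (hor h.adj_right) (hor h.adj)
  choose! g hg hperm using hpath
  set f : Pt × Pt → List Pt := fun e => if e ∈ D then [e.1, e.2] else [e.2, e.1] with hf
  have hf_len : ∀ e, (f e).length = 2 := fun e => by simp only [hf]; split_ifs <;> rfl
  have hf_inj : Set.InjOn f E := by
    rintro ⟨x, y⟩ he ⟨x', y'⟩ he' heq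
    have h1 := (hedge _ he).2
    have h2 := (hedge _ he').2
    simp only [hf] at heq h1 h2
    split_ifs at heq <;> simp only [List.cons.injEq, and_true] at heq <;>
      obtain ⟨rfl, rfl⟩ := heq <;> first | rfl | exact absurd h1 h2.not_gt
  have hg_inj : Set.InjOn g W := by
    intro v hv v' hv' heq
    have hp : [a v, v, b v].Perm [a v', v', b v'] :=
      (hperm v hv).symm.trans (heq ▸ hperm v' hv')
    have h1 := (hab v hv).left
    have h2 := (hab v hv).right
    have h3 := (hab v' hv').left
    have h4 := (hab v' hv').right
    have m1 : a v ∈ [a v', v', b v'] := hp.subset (by simp)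
    have m2 : v ∈ [a v', v', b v'] := hp.subset (by simp)
    have m3 : b v ∈ [a v', v', b v'] := hp.subset (by simp)
    simp only [List.mem_cons, List.not_mem_nil, or_false] at m1 m2 m3
    rcases m2 with e | e | e
    · rcases m1 with e' | e' | e' <;>
        linarith [congrArg T.X e, congrArg T.X e']
    · exact e
    · rcases m3 with e' | e' | e' <;>
        linarith [congrArg T.X e, congrArg T.X e']
  have hdisj : Disjoint (E.image f) (W.image g) := by
    rw [Finset.disjoint_left]
    intro L h1 h2
    obtain ⟨e, -, rfl⟩ := Finset.mem_image.1 h1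
    obtain ⟨v, hv, heq⟩ := Finset.mem_image.1 h2
    have := (hperm v hv).length_eq
    rw [heq, hf_len] at this
    simp at this
  have hsub : ((E.image f ∪ W.image g : Finset (List Pt)) : Set (List Pt)) ⊆
      {L | IsDirPath D L} := by
    intro L hL
    rcases Finset.mem_union.1 (Finset.mem_coe.1 hL) with h | h
    · obtain ⟨⟨x, y⟩, he, rfl⟩ := Finset.mem_image.1 h
      have hxy := (hedge _ he).1
      have hne := T.ne hxy
      refine ⟨(hf_len _).ge, ?_⟩
      simp only [hf]
      split_ifs with hmem
      · exact ⟨by simpa using hne, List.isChain_pair.2 hmem⟩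
      · exact ⟨by simpa using hne.symm, List.isChain_pair.2 ((hor hxy).resolve_left hmem)⟩
    · obtain ⟨v, hv, rfl⟩ := Finset.mem_image.1 h
      exact hg v hv
  have hcount := Set.ncard_le_ncard hsub (finite_setOf_isDirPath D)
  rw [Set.ncard_coe_finset, Finset.card_union_of_disjoint hdisj,
    Finset.card_image_of_injOn hf_inj, Finset.card_image_of_injOn hg_inj] at hcount
  unfold dirPathCount
  omega

end
end
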